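/- arXiv:2305.17599 — 2 statements merged into one kernel-verified Lean document; each statement's English description precedes it below -/
import Mathlib

section
/- Fix E ∈ ℝ and assume the Lyapunov exponent L(E) exists, i.e. (1/n)∫ ln‖M_n(x,E)‖ dν(x) → L(E) as n → ∞. Then for every κ > 0 there exists N ∈ ℕ such that for all n > N and all x in the circle, |P_n(x,E)| ≤ e^{n(L(E)+κ)}. -/
open MeasureTheory Polynomial Filter

noncomputable section

attribute [local instance] Matrix.normedAddCommGroup

/-- Dirichlet restriction `H_n(x)` of the Schrödinger operator with potential
`n ↦ λ f (T^n x)` to `[0, n-1]`: tridiagonal with diagonal `λ f (T^j x)` and `1`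
on the two off-diagonals. -/
def HDir (lam : ℝ) (f : ℝ → ℝ) (T : Equiv.Perm ℝ) (x : ℝ) (n : ℕ) :
    Matrix (Fin n) (Fin n) ℝ :=
  Matrix.of fun i j : Fin n =>
    (if i = j then lam * f ((T ^ (i : ℕ)) x) else 0) +
    (if (i : ℕ) + 1 = (j : ℕ) ∨ (j : ℕ) + 1 = (i : ℕ) then 1 else 0)

/-- Periodic restriction `H̃_n(x)`: the Dirichlet restriction with additional
entries `1` in the corners `(0, n-1)` and `(n-1, 0)`. -/
def HPer (lam : ℝ) (f : ℝ → ℝ) (T : Equiv.Perm ℝ) (x : ℝ) (n : ℕ) :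
    Matrix (Fin n) (Fin n) ℝ :=
  HDir lam f T x n +
    Matrix.of (fun i j : Fin n =>
      if ((i : ℕ) = 0 ∧ (j : ℕ) = n - 1) ∨ ((i : ℕ) = n - 1 ∧ (j : ℕ) = 0) then (1 : ℝ) else 0)

/-- `P_n(x,E) = det (H_n(x) - E)`. -/
def Pdet (lam : ℝ) (f : ℝ → ℝ) (T : Equiv.Perm ℝ) (x E : ℝ) (n : ℕ) : ℝ :=
  (HDir lam f T x n - E • (1 : Matrix (Fin n) (Fin n) ℝ)).det

/-- `P_n(x,E)` with integer index, with the conventions `P_0 = 1` and `P_n = 0` for `n < 0`. -/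
def PdetI (lam : ℝ) (f : ℝ → ℝ) (T : Equiv.Perm ℝ) (x E : ℝ) (n : ℤ) : ℝ :=
  if 0 ≤ n then Pdet lam f T x E n.toNat else 0

/-- `P̃_n(x,E) = det (H̃_n(x) - E)`. -/
def PtildeDet (lam : ℝ) (f : ℝ → ℝ) (T : Equiv.Perm ℝ) (x E : ℝ) (n : ℕ) : ℝ :=
  (HPer lam f T x n - E • (1 : Matrix (Fin n) (Fin n) ℝ)).det

/-- One-step transfer matrix `A_i(x,E)`. -/
def transferA (lam : ℝ) (f : ℝ → ℝ) (T : Equiv.Perm ℝ) (E x : ℝ) (i : ℕ) :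
    Matrix (Fin 2) (Fin 2) ℝ :=
  !![E - lam * f ((T ^ i) x), -1; 1, 0]

/-- `n`-step transfer matrix `M_n(x,E) = A_{n-1} ⋯ A_0`. -/
def transferM (lam : ℝ) (f : ℝ → ℝ) (T : Equiv.Perm ℝ) (E x : ℝ) :
    ℕ → Matrix (Fin 2) (Fin 2) ℝ
  | 0 => 1
  | m + 1 => transferA lam f T E x m * transferM lam f T E x m

/-- Dirichlet restriction `H_{[a, a+m-1]}(x)` of the operator to the integer
interval starting at `a : ℤ` of length `m`. -/
def HBox (lam : ℝ) (f : ℝ → ℝ) (T : Equiv.Perm ℝ) (x : ℝ) (a : ℤ) (m : ℕ) :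
    Matrix (Fin m) (Fin m) ℝ :=
  Matrix.of fun i j : Fin m =>
    (if i = j then lam * f ((T ^ (a + ((i : ℕ) : ℤ))) x) else 0) +
    (if (i : ℕ) + 1 = (j : ℕ) ∨ (j : ℕ) + 1 = (i : ℕ) then 1 else 0)

/-- Green function `G_{x,E,[a,a+m-1]} = (H_{[a,a+m-1]}(x) - E)⁻¹`. -/
def GBox (lam : ℝ) (f : ℝ → ℝ) (T : Equiv.Perm ℝ) (x E : ℝ) (a : ℤ) (m : ℕ) :
    Matrix (Fin m) (Fin m) ℝ :=
  (HBox lam f T x a m - E • (1 : Matrix (Fin m) (Fin m) ℝ))⁻¹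

/-- A point `n : ℤ` is `(x, c, qk)`-regular: there is an interval `[a, b]` of length
`qk` (`b = a + qk - 1`) containing `n` with `|n - a| ≥ qk/5`, `|n - b| ≥ qk/5` and
`|G(a,n)| ≤ e^{-c|n-a|}`, `|G(n,b)| ≤ e^{-c|n-b|}`. -/
def RegularPt (lam : ℝ) (f : ℝ → ℝ) (T : Equiv.Perm ℝ) (x E c : ℝ) (qk : ℕ) (n : ℤ) : Prop :=
  ∃ (a : ℤ) (i0 i j : Fin qk),
    (i0 : ℕ) = 0 ∧ (j : ℕ) = qk - 1 ∧ n = a + ((i : ℕ) : ℤ) ∧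
    (qk : ℝ) / 5 ≤ ((i : ℕ) : ℝ) ∧ (qk : ℝ) / 5 ≤ ((j : ℕ) : ℝ) - ((i : ℕ) : ℝ) ∧
    |GBox lam f T x E a qk i0 i| ≤ Real.exp (-c * ((i : ℕ) : ℝ)) ∧
    |GBox lam f T x E a qk i j| ≤ Real.exp (-c * (((j : ℕ) : ℝ) - ((i : ℕ) : ℝ)))

/-- The `ν`-measure of the positively oriented arc of the circle `ℝ/ℤ` from `u` to `v`
(computed for a `1`-periodic measure `ν` on `ℝ`). -/
def arcMeasure (ν : Measure ℝ) (u v : ℝ) : ℝ :=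
  (ν (Set.Icc u (u + Int.fract (v - u)))).toReal

/-- The `ν`-measure of the smaller of the two complementary arcs between `u` and `v`. -/
def arcDist (ν : Measure ℝ) (u v : ℝ) : ℝ :=
  min (arcMeasure ν u v) (arcMeasure ν v u)

/-- The measure of the gap of the orbit point `T^j x` in the partition of the circle
by `x, Tx, …, T^{qk-1}x`: the measure of the positively oriented arc from `T^j x` to the
closest (in the positive direction) other orbit point. -/
def gapMeas (ν : Measure ℝ) (T : Equiv.Perm ℝ) (x : ℝ) (qk : ℕ) (j : ℕ) : ℝ :=
  sInf ((fun j' : ℕ => arcMeasure ν ((T ^ j) x) ((T ^ j') x)) '' {j' | j' < qk ∧ j' ≠ j})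

/-- `β(α) = limsup_k (ln q_{k+1}) / q_k` computed from the sequence of
continued-fraction denominators. -/
def cfBeta (q : ℕ → ℕ) : ℝ :=
  Filter.limsup (fun k : ℕ => Real.log (q (k + 1) : ℝ) / (q k : ℝ)) Filter.atTop

/-!
Up to sign `P_n(x, E)` is the upper left entry of `M_n(x, E)`, so it suffices to bound
`log (2‖M_n(x, E)‖)` uniformly in `x`; this is a subadditive cocycle over the circle homeomorphism
induced by `T`, bounded and `ν`-almost everywhere continuous for each `n`.

Comparability of `ν` with length makes the iterates of `T` equi-Lipschitz. It also forbids the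
semiconjugacy of `T` with the irrational rotation to collapse an arc, since by Poincaré recurrence
such an arc would meet one of its images; hence every orbit is dense. In a compact equicontinuous
system with dense orbits, all orbits shadow each other after a uniformly bounded time, so a Birkhoff
sum of `g` at any point is bounded, up to a constant, by `n ∫ sup_{B(x, δ)} g dν`, and this integral
tends to `∫ g dν` as `δ → 0` when `g` is bounded and almost everywhere continuous. Applied to
`g = log (2‖M_m‖)` with `m` large, this gives the bound, because a subadditive cocycle `a` satisfies
`m a_{n+m} ≤ ∑_{i < n} a_m ∘ T^i + O(1)`.
-/

/-! ### Suprema over small balls -/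

section BallSup

variable {X : Type*} [PseudoMetricSpace X] {g : X → ℝ} {B δ : ℝ}

/-- The supremum of `g` over the open `δ`-ball about `x`: a lower semicontinuous majorant of `g`
that decreases to `g` at every continuity point of `g` as `δ → 0⁺`. -/
def ballSup (g : X → ℝ) (δ : ℝ) (x : X) : ℝ :=
  ⨆ y : Metric.ball x δ, g y

lemma le_ballSup (hB : ∀ x, |g x| ≤ B) {x y : X} (hy : dist y x < δ) : g y ≤ ballSup g δ x :=
  le_ciSup (f := fun z : Metric.ball x δ => g z)
    ⟨B, Set.forall_mem_range.2 fun z => (abs_le.1 (hB z)).2⟩ ⟨y, hy⟩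

lemma ballSup_le (hδ : 0 < δ) {x : X} {c : ℝ} (hc : ∀ y, dist y x < δ → g y ≤ c) :
    ballSup g δ x ≤ c :=
  have : Nonempty (Metric.ball x δ) := ⟨⟨x, Metric.mem_ball_self hδ⟩⟩
  ciSup_le fun y => hc y y.2

lemma self_le_ballSup (hB : ∀ x, |g x| ≤ B) (hδ : 0 < δ) (x : X) : g x ≤ ballSup g δ x :=
  le_ballSup hB (by rwa [dist_self])

lemma abs_ballSup_le (hB : ∀ x, |g x| ≤ B) (hδ : 0 < δ) (x : X) : |ballSup g δ x| ≤ B :=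
  abs_le.2 ⟨(abs_le.1 (hB x)).1.trans (self_le_ballSup hB hδ x),
    ballSup_le hδ fun y _ => (abs_le.1 (hB y)).2⟩

lemma lowerSemicontinuous_ballSup (hB : ∀ x, |g x| ≤ B) (hδ : 0 < δ) :
    LowerSemicontinuous (ballSup g δ) := by
  intro x c hc
  have : Nonempty (Metric.ball x δ) := ⟨⟨x, Metric.mem_ball_self hδ⟩⟩
  obtain ⟨⟨y, hy⟩, hcy⟩ := exists_lt_of_lt_ciSup hc
  filter_upwards [Metric.isOpen_ball.mem_nhds (Metric.mem_ball'.2 hy)] with z hz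
  exact hcy.trans_le (le_ballSup hB (Metric.mem_ball'.1 hz))

lemma measurable_ballSup [MeasurableSpace X] [OpensMeasurableSpace X] (hB : ∀ x, |g x| ≤ B)
    (hδ : 0 < δ) : Measurable (ballSup g δ) :=
  (lowerSemicontinuous_ballSup hB hδ).measurable

lemma tendsto_ballSup (hB : ∀ x, |g x| ≤ B) {x : X} (hx : ContinuousAt g x) :
    Tendsto (ballSup g · x) (nhdsWithin 0 (Set.Ioi 0)) (nhds (g x)) := by
  refine tendsto_order.2 ⟨fun c hc => ?_, fun c hc => ?_⟩
  · filter_upwards [self_mem_nhdsWithin] with δ hδ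
    exact hc.trans_le (self_le_ballSup hB hδ x)
  · obtain ⟨c', hgc', hc'⟩ := exists_between hc
    obtain ⟨r, hr, hball⟩ := Metric.eventually_nhds_iff.1 (hx.eventually_lt_const hgc')
    filter_upwards [Ioo_mem_nhdsGT hr] with δ hδ
    exact (ballSup_le hδ.1 fun y hy => (hball (hy.trans hδ.2)).le).trans_lt hc'

variable [MeasurableSpace X] [OpensMeasurableSpace X] {μ : Measure X}

lemma aestronglyMeasurable_of_ae_continuousAt (hB : ∀ x, |g x| ≤ B)
    (hg : ∀ᵐ x ∂μ, ContinuousAt g x) : AEStronglyMeasurable g μ := by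
  have hlim := tendsto_one_div_add_atTop_nhds_zero_nat (𝕜 := ℝ)
  refine aestronglyMeasurable_of_tendsto_ae atTop (f := fun k : ℕ => ballSup g (1 / (k + 1)))
    (fun k => (measurable_ballSup hB Nat.one_div_pos_of_nat).aestronglyMeasurable) ?_
  filter_upwards [hg] with x hx
  exact (tendsto_ballSup hB hx).comp (tendsto_nhdsWithin_iff.2
    ⟨hlim, .of_forall fun _ => Set.mem_Ioi.2 Nat.one_div_pos_of_nat⟩)

variable [IsFiniteMeasure μ]

lemma integrable_of_ae_continuousAt (hB : ∀ x, |g x| ≤ B) (hg : ∀ᵐ x ∂μ, ContinuousAt g x) :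
    Integrable g μ :=
  .of_bound (aestronglyMeasurable_of_ae_continuousAt hB hg) B (.of_forall hB)

lemma integrable_ballSup (hB : ∀ x, |g x| ≤ B) (hδ : 0 < δ) : Integrable (ballSup g δ) μ :=
  .of_bound (measurable_ballSup hB hδ).aestronglyMeasurable B (.of_forall (abs_ballSup_le hB hδ))

lemma tendsto_integral_ballSup (hB : ∀ x, |g x| ≤ B) (hg : ∀ᵐ x ∂μ, ContinuousAt g x) :
    Tendsto (fun δ => ∫ x, ballSup g δ x ∂μ) (nhdsWithin 0 (Set.Ioi 0)) (nhds (∫ x, g x ∂μ)) := by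
  refine tendsto_integral_filter_of_dominated_convergence (fun _ => B) ?_ ?_
    (integrable_const B) (hg.mono fun x hx => tendsto_ballSup hB hx)
  · filter_upwards [self_mem_nhdsWithin] with δ hδ
    exact (measurable_ballSup hB hδ).aestronglyMeasurable
  · filter_upwards [self_mem_nhdsWithin] with δ hδ
    exact .of_forall (abs_ballSup_le hB hδ)

end BallSup

/-! ### Uniform upper bounds for Birkhoff sums -/

section Birkhoff

variable {X : Type*} {S : X → X} {g : X → ℝ} {B : ℝ}

lemma birkhoffSum_le_birkhoffSum_iterate_add (hB : ∀ x, |g x| ≤ B) (n j : ℕ) (x : X) :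
    birkhoffSum S g n (S^[j] x) ≤ birkhoffSum S g n x + j * (2 * B) := by
  induction j with
  | zero => simp
  | succ j ih =>
    have step := birkhoffSum_apply_sub_birkhoffSum S g n (S^[j] x)
    rw [Function.iterate_succ_apply']
    push_cast
    linarith [abs_le.1 (hB (S^[n] (S^[j] x))), abs_le.1 (hB (S^[j] x))]

lemma integral_birkhoffSum [MeasurableSpace X] {μ : Measure X} (hS : MeasurePreserving S μ μ)
    (hg : Integrable g μ) (n : ℕ) : ∫ x, birkhoffSum S g n x ∂μ = n * ∫ x, g x ∂μ := by
  have hint (i : ℕ) : Integrable (fun x => g (S^[i] x)) μ :=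
    (hS.iterate i).integrable_comp_of_integrable hg
  have hcomp (i : ℕ) : ∫ x, g (S^[i] x) ∂μ = ∫ x, g x ∂μ := by
    have hgi : AEStronglyMeasurable g (μ.map S^[i]) := by
      rw [(hS.iterate i).map_eq]; exact hg.aestronglyMeasurable
    rw [← integral_map (hS.iterate i).aemeasurable hgi, (hS.iterate i).map_eq]
  simp only [birkhoffSum]
  rw [integral_finsetSum _ fun i _ => hint i]
  simp [hcomp]

variable [PseudoMetricSpace X] [CompactSpace X]

lemma exists_uniform_hitting_time (hS : Continuous S) (hdense : ∀ x, DenseRange fun j => S^[j] x)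
    {δ : ℝ} (hδ : 0 < δ) : ∃ J, ∀ x y, ∃ j ≤ J, dist (S^[j] x) y < δ := by
  let U (j : ℕ) : Set (X × X) := {p | dist (S^[j] p.1) p.2 < δ}
  have hU (j : ℕ) : IsOpen (U j) :=
    isOpen_lt (((hS.iterate j).comp continuous_fst).dist continuous_snd) continuous_const
  have hcover : Set.univ ⊆ ⋃ j, U j := fun p _ =>
    Set.mem_iUnion.2 <| ((hdense p.1).exists_dist_lt p.2 hδ).imp fun j hj => by
      rwa [dist_comm] at hj
  obtain ⟨t, ht⟩ := isCompact_univ.elim_finite_subcover U hU hcover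
  refine ⟨t.sup id, fun x y => ?_⟩
  obtain ⟨j, hj, hxy⟩ := Set.mem_iUnion₂.1 (ht (Set.mem_univ (x, y)))
  exact ⟨j, Finset.le_sup (f := id) hj, hxy⟩

variable [MeasurableSpace X] [OpensMeasurableSpace X] {μ : Measure X} [IsProbabilityMeasure μ]

/- The orbit of any `x` comes `η`-close to `z` at a time `j ≤ J`, after which equicontinuity keeps
the two orbits `δ`-close; the Birkhoff sum at `z` is thus at most the one of `ballSup g δ` at `x`
up to a constant, and it remains to average over `x`. -/
lemma exists_birkhoffSum_le_integral_ballSup (hS : MeasurePreserving S μ μ)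
    (hequi : UniformEquicontinuous fun n => S^[n]) (hdense : ∀ x, DenseRange fun j => S^[j] x)
    (hB : ∀ x, |g x| ≤ B) {δ : ℝ} (hδ : 0 < δ) :
    ∃ C, ∀ n z, birkhoffSum S g n z ≤ n * ∫ x, ballSup g δ x ∂μ + C := by
  obtain ⟨η, hη, hclose⟩ := Metric.uniformEquicontinuous_iff.1 hequi δ hδ
  have hScont : Continuous S := (hequi.uniformContinuous 1).continuous
  obtain ⟨J, hJ⟩ := exists_uniform_hitting_time hScont hdense hη
  refine ⟨J * (2 * B), fun n z => ?_⟩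
  have pointwise (x : X) :
      birkhoffSum S g n z ≤ birkhoffSum S (ballSup g δ) n x + J * (2 * B) := by
    obtain ⟨j, hjJ, hj⟩ := hJ x z
    calc birkhoffSum S g n z
        ≤ birkhoffSum S (ballSup g δ) n (S^[j] x) := Finset.sum_le_sum fun i _ =>
          le_ballSup hB (by rw [dist_comm]; exact hclose _ _ hj i)
      _ ≤ birkhoffSum S (ballSup g δ) n x + j * (2 * B) :=
          birkhoffSum_le_birkhoffSum_iterate_add (abs_ballSup_le hB hδ) n j x
      _ ≤ birkhoffSum S (ballSup g δ) n x + J * (2 * B) := by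
          have : 0 ≤ B := (abs_nonneg _).trans (hB x)
          gcongr
  have hint : Integrable (birkhoffSum S (ballSup g δ) n) μ := integrable_finsetSum _ fun i _ =>
    (hS.iterate i).integrable_comp_of_integrable (integrable_ballSup hB hδ)
  calc birkhoffSum S g n z
      = ∫ _, birkhoffSum S g n z ∂μ := by simp
    _ ≤ ∫ x, birkhoffSum S (ballSup g δ) n x + J * (2 * B) ∂μ :=
        integral_mono (integrable_const _) (hint.add (integrable_const _)) pointwise
    _ = n * ∫ x, ballSup g δ x ∂μ + J * (2 * B) := by
        rw [integral_add hint (integrable_const _),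
          integral_birkhoffSum hS (integrable_ballSup hB hδ)]
        simp

theorem eventually_birkhoffSum_le (hS : MeasurePreserving S μ μ)
    (hequi : UniformEquicontinuous fun n => S^[n]) (hdense : ∀ x, DenseRange fun j => S^[j] x)
    (hB : ∀ x, |g x| ≤ B) (hg : ∀ᵐ x ∂μ, ContinuousAt g x) {ε : ℝ} (hε : 0 < ε) :
    ∀ᶠ n : ℕ in atTop, ∀ x, birkhoffSum S g n x ≤ n * (∫ y, g y ∂μ + ε) := by
  have hsup : ∀ᶠ δ in nhdsWithin 0 (Set.Ioi 0), ∫ x, ballSup g δ x ∂μ < ∫ y, g y ∂μ + ε / 2 :=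
    (tendsto_integral_ballSup hB hg).eventually_lt_const (by linarith)
  obtain ⟨δ, hδint, hδ⟩ := (hsup.and self_mem_nhdsWithin).exists
  obtain ⟨C, hC⟩ := exists_birkhoffSum_le_integral_ballSup hS hequi hdense hB hδ
  have hlarge : ∀ᶠ n : ℕ in atTop, C ≤ n * (ε / 2) :=
    (tendsto_natCast_atTop_atTop.atTop_mul_const (half_pos hε)).eventually_ge_atTop C
  filter_upwards [hlarge] with n hn x
  calc birkhoffSum S g n x
      ≤ n * ∫ y, ballSup g δ y ∂μ + C := hC n x
    _ ≤ n * (∫ y, g y ∂μ + ε / 2) + n * (ε / 2) := by gcongr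
    _ = n * (∫ y, g y ∂μ + ε) := by ring

end Birkhoff

/-! ### Subadditive cocycles -/

/-- The sequence `a` of functions is subadditive along the orbits of `S`, as in Kingman's
theorem. -/
def IsSubadditiveCocycle {X : Type*} (S : X → X) (a : ℕ → X → ℝ) : Prop :=
  ∀ m n x, a (m + n) x ≤ a m x + a n (S^[m] x)

namespace IsSubadditiveCocycle

variable {X : Type*} {S : X → X} {a : ℕ → X → ℝ}

lemma sum_add_le (ha : IsSubadditiveCocycle S a) (m n : ℕ) (x : X) :
    ∑ s ∈ Finset.range m, a (n + s) x
      ≤ ∑ s ∈ Finset.range m, a s x + birkhoffSum S (a m) n x := by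
  induction n with
  | zero => simp
  | succ n ih =>
    have shift : ∑ s ∈ Finset.range m, a (n + 1 + s) x
        = ∑ s ∈ Finset.range m, a (n + s) x + a (n + m) x - a n x := by
      have h := (Finset.sum_range_succ' (fun s => a (n + s) x) m).symm.trans
        (Finset.sum_range_succ (fun s => a (n + s) x) m)
      simp only [add_zero] at h
      simp only [add_right_comm n 1, add_assoc n _ 1]
      linarith
    rw [shift, birkhoffSum_succ]
    linarith [ha n m x]

lemma mul_le_birkhoffSum_add (ha : IsSubadditiveCocycle S a) {m : ℕ} {D : ℝ}
    (hD : ∀ s ≤ m, ∀ x, |a s x| ≤ D) (n : ℕ) (x : X) :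
    m * a (n + m) x ≤ birkhoffSum S (a m) n x + 2 * m * D := by
  have hlast : ∀ s ∈ Finset.range m, a (n + m) x ≤ a (n + s) x + D := fun s hs => by
    have hsm : n + m = n + s + (m - s) := by have := Finset.mem_range.1 hs; omega
    rw [hsm]
    linarith [ha (n + s) (m - s) x, (abs_le.1 (hD (m - s) (m.sub_le s) (S^[n + s] x))).2]
  have hfirst : ∑ s ∈ Finset.range m, a s x ≤ m * D := by
    simpa using Finset.sum_le_sum fun s hs =>
      (abs_le.1 (hD s (Finset.mem_range.1 hs).le x)).2
  calc m * a (n + m) x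
      = ∑ _s ∈ Finset.range m, a (n + m) x := by simp
    _ ≤ ∑ s ∈ Finset.range m, (a (n + s) x + D) := Finset.sum_le_sum hlast
    _ = ∑ s ∈ Finset.range m, a (n + s) x + m * D := by simp [Finset.sum_add_distrib]
    _ ≤ birkhoffSum S (a m) n x + 2 * m * D := by linarith [ha.sum_add_le m n x]

variable [PseudoMetricSpace X] [CompactSpace X] [MeasurableSpace X] [OpensMeasurableSpace X]
  {μ : Measure X} [IsProbabilityMeasure μ]

theorem eventually_le (ha : IsSubadditiveCocycle S a) (hS : MeasurePreserving S μ μ)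
    (hequi : UniformEquicontinuous fun n => S^[n]) (hdense : ∀ x, DenseRange fun j => S^[j] x)
    (hbdd : ∀ n, ∃ B, ∀ x, |a n x| ≤ B) (hcont : ∀ n, ∀ᵐ x ∂μ, ContinuousAt (a n) x) {L : ℝ}
    (hL : Tendsto (fun n : ℕ => (1 / (n : ℝ)) * ∫ x, a n x ∂μ) atTop (nhds L))
    {κ : ℝ} (hκ : 0 < κ) : ∀ᶠ n : ℕ in atTop, ∀ x, a n x ≤ n * (L + κ) := by
  choose B hB using hbdd
  obtain ⟨m, hm, hmpos⟩ := ((hL.eventually_lt_const (show L < L + κ / 3 by linarith)).and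
    (eventually_gt_atTop 0)).exists
  have hm0 : (0 : ℝ) < m := Nat.cast_pos.2 hmpos
  have hmean : ∫ x, a m x ∂μ ≤ m * (L + κ / 3) := by
    rw [one_div, inv_mul_lt_iff₀ hm0] at hm
    exact hm.le
  obtain ⟨D, hD⟩ : ∃ D, ∀ s ≤ m, ∀ x, |a s x| ≤ D :=
    ⟨∑ s ∈ Finset.range (m + 1), |B s|, fun s hs x => (hB s x).trans <| (le_abs_self _).trans <|
      Finset.single_le_sum (f := fun s => |B s|) (fun _ _ => abs_nonneg _)
        (Finset.mem_range.2 (Nat.lt_succ_of_le hs))⟩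
  have hbirk := eventually_birkhoffSum_le hS hequi hdense (hB m) (hcont m)
    (show 0 < m * (κ / 3) by positivity)
  have hlarge : ∀ᶠ n : ℕ in atTop, 2 * D - m * (L + κ) ≤ n * (κ / 3) :=
    (tendsto_natCast_atTop_atTop.atTop_mul_const (by positivity)).eventually_ge_atTop _
  rw [← map_add_atTop_eq_nat m, eventually_map]
  filter_upwards [hbirk, hlarge] with n hn hDn x
  refine le_of_mul_le_mul_left ?_ hm0
  calc m * a (n + m) x
      ≤ birkhoffSum S (a m) n x + 2 * m * D := ha.mul_le_birkhoffSum_add hD n x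
    _ ≤ n * (∫ y, a m y ∂μ + m * (κ / 3)) + 2 * m * D := by gcongr; exact hn x
    _ ≤ n * (m * (L + κ / 3) + m * (κ / 3)) + 2 * m * D := by gcongr
    _ = m * (n * (L + κ) + (2 * D - n * (κ / 3))) := by ring
    _ ≤ m * (((n + m : ℕ) : ℝ) * (L + κ)) := by
        push_cast
        gcongr
        linarith

end IsSubadditiveCocycle

/-! ### Periodic measures on the line -/

section PeriodicMeasure

variable {ν : Measure ℝ}

lemma measurePreserving_add_int (hν : MeasurePreserving (fun t : ℝ => t + 1) ν ν) (k : ℤ) :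
    MeasurePreserving (fun t : ℝ => t + k) ν ν := by
  have hadd : MeasurePreserving (MeasurableEquiv.addRight (1 : ℝ)) ν ν := hν
  induction k with
  | zero => simpa using! MeasurePreserving.id ν
  | succ k ih => simpa [Function.comp_def, add_assoc] using hadd.comp ih
  | pred k ih =>
    simpa [Function.comp_def, add_assoc, sub_eq_add_neg] using
      (hadd.symm (MeasurableEquiv.addRight 1)).comp ih

lemma vaddInvariantMeasure_zmultiples_one (hν : MeasurePreserving (fun t : ℝ => t + 1) ν ν) :
    VAddInvariantMeasure (AddSubgroup.zmultiples (1 : ℝ)) ℝ ν where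
  measure_preimage_vadd := by
    rintro ⟨_, k, rfl⟩ A hA
    have h := (measurePreserving_add_int hν k).measure_preimage hA.nullMeasurableSet
    simpa [AddSubgroup.vadd_def, add_comm] using h

lemma isAddFundamentalDomain_Ico_one (a : ℝ) :
    IsAddFundamentalDomain (AddSubgroup.zmultiples (1 : ℝ)) (Set.Ico a (a + 1)) ν := by
  refine IsAddFundamentalDomain.mk' nullMeasurableSet_Ico fun x => ?_
  have hbij : Function.Bijective
      (Set.codRestrict (fun n : ℤ => n • (1 : ℝ)) (AddSubgroup.zmultiples (1 : ℝ))
        fun n => ⟨n, rfl⟩) :=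
    (Equiv.ofInjective _ (zsmul_left_strictMono one_pos).injective).bijective
  refine hbij.existsUnique_iff.2 ?_
  simpa only [add_comm x] using! existsUnique_add_zsmul_mem_Ico one_pos x a

/-- The measure on `ℝ/ℤ` represented by the `1`-periodic measure `ν` on `ℝ`, obtained by pushing
forward the restriction of `ν` to one period. -/
def circleMeasure (ν : Measure ℝ) : Measure UnitAddCircle :=
  (ν.restrict (Set.Ico 0 1)).map (↑)

lemma isProbabilityMeasure_circleMeasure (hν : ν (Set.Ico 0 1) = 1) :
    IsProbabilityMeasure (circleMeasure ν) :=
  have : IsProbabilityMeasure (ν.restrict (Set.Ico 0 1)) := ⟨by simpa using hν⟩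
  Measure.isProbabilityMeasure_map AddCircle.measurable_mk'.aemeasurable

lemma circleMeasure_apply (hν : MeasurePreserving (fun t : ℝ => t + 1) ν ν)
    {A : Set UnitAddCircle} (hA : MeasurableSet A) (a : ℝ) :
    circleMeasure ν A = ν ((↑) ⁻¹' A ∩ Set.Ico a (a + 1)) := by
  have := vaddInvariantMeasure_zmultiples_one hν
  have hA' : MeasurableSet ((↑) ⁻¹' A : Set ℝ) := AddCircle.measurable_mk' hA
  rw [circleMeasure, Measure.map_apply AddCircle.measurable_mk' hA, Measure.restrict_apply hA']
  have hdom := isAddFundamentalDomain_Ico_one (ν := ν) 0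
  rw [zero_add] at hdom
  refine hdom.measure_set_eq (isAddFundamentalDomain_Ico_one a) hA' ?_
  rintro ⟨_, k, rfl⟩
  ext t
  have hk : ((k : ℝ) : UnitAddCircle) = 0 := by simp
  simp [AddSubgroup.vadd_def, hk]

lemma le_circleMeasure_coe_image_Ioo (hν : MeasurePreserving (fun t : ℝ => t + 1) ν ν) {u v : ℝ}
    (hvu : v ≤ u + 1) : ν (Set.Ioo u v) ≤ circleMeasure ν ((↑) '' Set.Ioo u v) := by
  have hopen : IsOpen ((↑) '' Set.Ioo u v : Set UnitAddCircle) :=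
    QuotientAddGroup.isOpenMap_coe _ isOpen_Ioo
  rw [circleMeasure_apply hν hopen.measurableSet u]
  exact measure_mono fun t ht => ⟨⟨t, ht, rfl⟩, ht.1.le, ht.2.trans_le hvu⟩

/-- On arcs of length at most one, `ν` is comparable to length: `c · ν ≤ length ≤ C · ν`. The second
inequality forces nondegenerate arcs to have finite measure, as `ν.real` is `0` on the others. -/
def IsComparableToLength (ν : Measure ℝ) (c C : ℝ) : Prop :=
  ∀ u v : ℝ, u ≤ v → v ≤ u + 1 →
    c * ν.real (Set.Icc u v) ≤ v - u ∧ v - u ≤ C * ν.real (Set.Icc u v)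

end PeriodicMeasure

/-! ### Circle maps given by their lifts -/

section CircleMap

variable {L : CircleDeg1Lift} {ν : Measure ℝ} {c C : ℝ}

/-- The self-map of `ℝ/ℤ` induced by a degree one lift. -/
def inducedCircleMap (L : CircleDeg1Lift) : UnitAddCircle → UnitAddCircle :=
  Function.Periodic.lift (f := fun x => (L x : UnitAddCircle)) fun x => by
    simp [L.map_add_one]

lemma inducedCircleMap_iterate_coe (L : CircleDeg1Lift) (n : ℕ) (x : ℝ) :
    (inducedCircleMap L)^[n] x = (L^[n] x : UnitAddCircle) :=
  ((show Function.Semiconj ((↑) : ℝ → UnitAddCircle) L (inducedCircleMap L) from fun _ =>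
    rfl).iterate_right n x).symm

lemma measurable_inducedCircleMap (hL : Function.Bijective L) :
    Measurable (inducedCircleMap L) := by
  have hcont : Continuous (inducedCircleMap L) := continuous_quot_lift _ <|
    (AddCircle.continuous_mk' 1).comp (L.continuous_iff_surjective.2 hL.surjective)
  exact hcont.measurable

lemma circleDeg1Lift_strictMono (hL : Function.Bijective L) : StrictMono L :=
  L.monotone.strictMono_of_injective hL.injective

lemma measurePreserving_inducedCircleMap (hL : Function.Bijective L) (hLν : MeasurePreserving L ν ν)
    (hν : MeasurePreserving (fun t : ℝ => t + 1) ν ν) :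
    MeasurePreserving (inducedCircleMap L) (circleMeasure ν) (circleMeasure ν) := by
  refine ⟨measurable_inducedCircleMap hL, Measure.ext fun A hA => ?_⟩
  have hperiod : L ⁻¹' Set.Ico (L 0) (L 0 + 1) = Set.Ico 0 (0 + 1) := by
    ext t
    simp only [Set.mem_preimage, Set.mem_Ico, ← L.map_add_one,
      (circleDeg1Lift_strictMono hL).le_iff_le, (circleDeg1Lift_strictMono hL).lt_iff_lt]
  have hmeas : MeasurableSet ((↑) ⁻¹' A ∩ Set.Ico (L 0) (L 0 + 1) : Set ℝ) :=
    (AddCircle.measurable_mk' hA).inter measurableSet_Ico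
  rw [Measure.map_apply (measurable_inducedCircleMap hL) hA,
    circleMeasure_apply hν (measurable_inducedCircleMap hL hA) 0, circleMeasure_apply hν hA (L 0),
    ← hLν.measure_preimage hmeas.nullMeasurableSet, Set.preimage_inter, hperiod]
  rfl

lemma measure_Icc_iterate (hL : Function.Bijective L) (hLν : MeasurePreserving L ν ν) (n : ℕ)
    (x y : ℝ) : ν (Set.Icc (L^[n] x) (L^[n] y)) = ν (Set.Icc x y) := by
  rw [← (hLν.iterate n).measure_preimage measurableSet_Icc.nullMeasurableSet]
  congr 1
  ext t
  simp [((circleDeg1Lift_strictMono hL).iterate n).le_iff_le]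

lemma unitAddCircle_coe_eq_coe_iff {x y : ℝ} :
    (x : UnitAddCircle) = y ↔ ∃ k : ℤ, y = x + k := by
  simp [QuotientAddGroup.eq, AddSubgroup.mem_zmultiples_iff, eq_neg_add_iff_add_eq, eq_comm]

lemma exists_coe_eq_dist_eq (a b : UnitAddCircle) :
    ∃ x y : ℝ, (x : UnitAddCircle) = a ∧ (y : UnitAddCircle) = b ∧ |x - y| = dist a b := by
  induction a using QuotientAddGroup.induction_on with | H x =>
  induction b using QuotientAddGroup.induction_on with | H y =>
  refine ⟨x - round (x - y), y, ?_, rfl, ?_⟩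
  · simp
  · rw [dist_eq_norm, ← QuotientAddGroup.mk_sub, UnitAddCircle.norm_eq, sub_right_comm]

lemma abs_iterate_sub_iterate_le (hL : Function.Bijective L) (hLν : MeasurePreserving L ν ν)
    (hc : 0 < c) (hC : 0 ≤ C) (hν : IsComparableToLength ν c C) (n : ℕ) {x y : ℝ}
    (hxy : |x - y| ≤ 1) : |L^[n] x - L^[n] y| ≤ C / c * |x - y| := by
  wlog hle : y ≤ x generalizing x y
  · rw [abs_sub_comm, abs_sub_comm x]
    exact this (by rwa [abs_sub_comm]) (le_of_not_ge hle)
  have hmono : L^[n] y ≤ L^[n] x := L.monotone.iterate n hle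
  rw [abs_of_nonneg (sub_nonneg.2 hle)] at hxy ⊢
  rw [abs_of_nonneg (sub_nonneg.2 hmono)]
  have hstep : L^[n] x ≤ L^[n] y + 1 := by
    rw [← L.coe_pow, ← (L ^ n).map_add_one]
    exact (L ^ n).monotone (by linarith)
  calc L^[n] x - L^[n] y
      ≤ C * ν.real (Set.Icc (L^[n] y) (L^[n] x)) := (hν _ _ hmono hstep).2
    _ = C * ν.real (Set.Icc y x) := by rw [Measure.real, measure_Icc_iterate hL hLν, Measure.real]
    _ ≤ C * ((x - y) / c) := by
        gcongr
        rw [le_div_iff₀' hc]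
        exact (hν y x hle (by linarith)).1
    _ = C / c * (x - y) := by ring

lemma uniformEquicontinuous_inducedCircleMap_iterate (hL : Function.Bijective L)
    (hLν : MeasurePreserving L ν ν) (hc : 0 < c) (hC : 0 ≤ C) (hν : IsComparableToLength ν c C) :
    UniformEquicontinuous fun n => (inducedCircleMap L)^[n] := by
  refine LipschitzWith.uniformEquicontinuous _ (C / c).toNNReal fun n =>
    LipschitzWith.of_dist_le_mul fun a b => ?_
  rw [Real.coe_toNNReal _ (by positivity)]
  obtain ⟨x, y, rfl, rfl, hdist⟩ := exists_coe_eq_dist_eq a b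
  have hle : |x - y| ≤ 1 := by
    rw [hdist, dist_eq_norm]
    exact (AddCircle.norm_le_half_period 1 one_ne_zero).trans (by norm_num)
  rw [inducedCircleMap_iterate_coe, inducedCircleMap_iterate_coe, ← hdist, dist_eq_norm,
    ← QuotientAddGroup.mk_sub]
  exact QuotientAddGroup.norm_mk_le_norm.trans (abs_iterate_sub_iterate_le hL hLν hc hC hν n hle)

lemma measure_Ioo_ne_zero (hν : IsComparableToLength ν c C) {u v : ℝ} (huv : u < v)
    (hvu : v ≤ u + 1) : ν (Set.Ioo u v) ≠ 0 := by
  obtain ⟨u', huu', hu'v⟩ := exists_between huv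
  obtain ⟨v', hu'v', hv'v⟩ := exists_between hu'v
  intro hzero
  have hnull : ν.real (Set.Icc u' v') = 0 := by
    rw [Measure.real, measure_mono_null (Set.Icc_subset_Ioo huu' hv'v) hzero, ENNReal.toReal_zero]
  have hlen := (hν u' v' hu'v'.le (by linarith)).2
  rw [hnull, mul_zero] at hlen
  linarith

/- An interval on which `F` is constant would, by Poincaré recurrence, contain a point that returns
to it modulo `1`, making a multiple of `α` an integer. -/
lemma strictMono_of_semiconj_translate (hL : Function.Bijective L) (hLν : MeasurePreserving L ν ν)
    (hper : MeasurePreserving (fun t : ℝ => t + 1) ν ν) (hprob : ν (Set.Ico 0 1) = 1)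
    (hν : IsComparableToLength ν c C) {α : ℝ} (hα : Irrational α) {F : CircleDeg1Lift}
    (hF : ∀ n x, F (L^[n] x) = n * α + F x) : StrictMono F := by
  refine F.monotone.strictMono_of_injective (.of_lt_imp_ne fun u w huw hFuw => ?_)
  obtain ⟨v, huv, hvle⟩ : ∃ v, u < v ∧ v ≤ min w (u + 1) := ⟨_, lt_min huw (by simp), le_rfl⟩
  have hconst {t : ℝ} (ht : t ∈ Set.Ioo u v) : F t = F u :=
    le_antisymm (hFuw ▸ F.monotone (ht.2.le.trans (hvle.trans (min_le_left _ _))))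
      (F.monotone ht.1.le)
  have := isProbabilityMeasure_circleMeasure hprob
  have hvu : v ≤ u + 1 := hvle.trans (min_le_right _ _)
  have hpos : circleMeasure ν ((↑) '' Set.Ioo u v) ≠ 0 := fun h0 =>
    measure_Ioo_ne_zero hν huv hvu (le_zero_iff.1 (h0 ▸ le_circleMeasure_coe_image_Ioo hper hvu))
  obtain ⟨_, ⟨x, hx, rfl⟩, n, hn, y, hy, hyx⟩ :=
    (measurePreserving_inducedCircleMap hL hLν hper).exists_mem_iterate_mem
      (QuotientAddGroup.isOpenMap_coe _ isOpen_Ioo).measurableSet.nullMeasurableSet hpos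
  rw [inducedCircleMap_iterate_coe] at hyx
  obtain ⟨k, hk⟩ := unitAddCircle_coe_eq_coe_iff.1 hyx
  have hreturn : n * α + F u = F u + k := by
    rw [← hconst hx, ← hF, hk, F.map_add_int, hconst hy, hconst hx]
  exact (hα.natCast_mul hn).ne_int k (by linarith)

lemma exists_nat_mul_add_int_mem_Ioo {α : ℝ} (hα : Irrational α) {u v : ℝ} (huv : u < v) :
    ∃ (n : ℕ) (k : ℤ), n * α + k ∈ Set.Ioo u v := by
  have hdense : DenseRange fun n : ℕ => n • (α : UnitAddCircle) :=
    denseRange_zsmul_iff_nsmul.1 (AddCircle.denseRange_zsmul_coe_iff.2 (by simpa using hα))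
  obtain ⟨n, t, ht, htn⟩ := hdense.exists_mem_open (QuotientAddGroup.isOpenMap_coe _ isOpen_Ioo)
    ((Set.nonempty_Ioo.2 huv).image _)
  obtain ⟨k, hk⟩ := unitAddCircle_coe_eq_coe_iff.1
    (((QuotientAddGroup.mk_nsmul _ α n).trans htn.symm : ((n • α : ℝ) : UnitAddCircle) = t))
  refine ⟨n, k, ?_⟩
  rwa [hk, nsmul_eq_mul] at ht

open CircleDeg1Lift in
lemma exists_strictMono_semiconj_translate (hL : Function.Bijective L)
    (hLν : MeasurePreserving L ν ν) (hper : MeasurePreserving (fun t : ℝ => t + 1) ν ν)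
    (hprob : ν (Set.Ico 0 1) = 1) (hν : IsComparableToLength ν c C)
    (hirr : Irrational L.translationNumber) :
    ∃ F : CircleDeg1Lift, StrictMono F ∧ ∀ n x, F (L^[n] x) = n * L.translationNumber + F x := by
  let R : CircleDeg1Liftˣ := translate (Multiplicative.ofAdd L.translationNumber)
  obtain ⟨F, hF⟩ := semiconj_of_isUnit_of_translationNumber_eq (isUnit_iff_bijective.2 hL) R.isUnit
    (translationNumber_translate L.translationNumber).symm
  have hFn (n : ℕ) (x : ℝ) : F (L^[n] x) = n * L.translationNumber + F x := by
    rw [hF.iterate_right n x, translate_iterate, translate_apply]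
  exact ⟨F, strictMono_of_semiconj_translate hL hLν hper hprob hν hirr hFn, hFn⟩

lemma denseRange_inducedCircleMap_iterate (hL : Function.Bijective L)
    (hLν : MeasurePreserving L ν ν) (hper : MeasurePreserving (fun t : ℝ => t + 1) ν ν)
    (hprob : ν (Set.Ico 0 1) = 1) (hν : IsComparableToLength ν c C)
    (hirr : Irrational L.translationNumber) (a : UnitAddCircle) :
    DenseRange fun j => (inducedCircleMap L)^[j] a := by
  obtain ⟨F, hFmono, hF⟩ := exists_strictMono_semiconj_translate hL hLν hper hprob hν hirr
  refine dense_iff_inter_open.2 fun U hU hUne => ?_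
  induction a using QuotientAddGroup.induction_on with | H x =>
  obtain ⟨b, hb⟩ := hUne
  induction b using QuotientAddGroup.induction_on with | H b =>
  obtain ⟨u, v, hbuv, hsub⟩ := mem_nhds_iff_exists_Ioo_subset.1
    ((hU.preimage (AddCircle.continuous_mk' 1)).mem_nhds hb)
  obtain ⟨j, k, hj⟩ := exists_nat_mul_add_int_mem_Ioo hirr
    (sub_lt_sub_right (hFmono (hbuv.1.trans hbuv.2)) (F x))
  have hjF : F (L^[j] x + k) ∈ Set.Ioo (F u) (F v) := by
    rw [F.map_add_int, hF]
    exact ⟨by linarith [hj.1], by linarith [hj.2]⟩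
  have hmem : ((L^[j] x + k : ℝ) : UnitAddCircle) ∈ U :=
    hsub ⟨hFmono.lt_iff_lt.1 hjF.1, hFmono.lt_iff_lt.1 hjF.2⟩
  refine ⟨_, ?_, j, inducedCircleMap_iterate_coe L j x⟩
  rwa [unitAddCircle_coe_eq_coe_iff.2 ⟨k, rfl⟩]

lemma continuousAt_periodic_lift {Y : Type*} [TopologicalSpace Y] {φ : ℝ → Y}
    (hφ : Function.Periodic φ 1) {x : ℝ} :
    ContinuousAt hφ.lift (x : UnitAddCircle) ↔ ContinuousAt φ x :=
  QuotientAddGroup.isOpenQuotientMap_mk.continuousAt_comp_iff.symm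

lemma ae_circleMeasure_continuousAt_lift {φ : ℝ → ℝ} (hφ : Function.Periodic φ 1)
    (hcont : ∀ᵐ x ∂ν, ContinuousAt φ x) : ∀ᵐ a ∂circleMeasure ν, ContinuousAt hφ.lift a := by
  refine (ae_map_iff AddCircle.measurable_mk'.aemeasurable
    (measurableSet_of_continuousAt hφ.lift)).2 ?_
  filter_upwards [ae_restrict_of_ae hcont] with x hx
  exact (continuousAt_periodic_lift hφ).2 hx

lemma integral_circleMeasure_lift {φ : ℝ → ℝ} (hφ : Function.Periodic φ 1)
    (hmeas : AEStronglyMeasurable hφ.lift (circleMeasure ν)) :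
    ∫ a, hφ.lift a ∂circleMeasure ν = ∫ x in Set.Ico 0 1, φ x ∂ν :=
  integral_map AddCircle.measurable_mk'.aemeasurable hmeas

theorem eventually_le_of_isSubadditiveCocycle_lift (hL : Function.Bijective L)
    (hirr : Irrational L.translationNumber) (hLν : MeasurePreserving L ν ν)
    (hper : MeasurePreserving (fun t : ℝ => t + 1) ν ν) (hprob : ν (Set.Ico 0 1) = 1)
    (hc : 0 < c) (hC : 0 ≤ C) (hν : IsComparableToLength ν c C) {φ : ℕ → ℝ → ℝ}
    (hφ : IsSubadditiveCocycle L φ) (hφper : ∀ n, Function.Periodic (φ n) 1)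
    (hbdd : ∀ n, ∃ B, ∀ x, |φ n x| ≤ B) (hcont : ∀ n, ∀ᵐ x ∂ν, ContinuousAt (φ n) x) {Λ : ℝ}
    (hΛ : Tendsto (fun n : ℕ => (1 / (n : ℝ)) * ∫ x in Set.Ico 0 1, φ n x ∂ν) atTop (nhds Λ))
    {κ : ℝ} (hκ : 0 < κ) : ∀ᶠ n : ℕ in atTop, ∀ x, φ n x ≤ n * (Λ + κ) := by
  have := isProbabilityMeasure_circleMeasure hprob
  let a (n : ℕ) : UnitAddCircle → ℝ := (hφper n).lift
  have ha : IsSubadditiveCocycle (inducedCircleMap L) a := fun m n b => by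
    induction b using QuotientAddGroup.induction_on with | H x =>
    rw [inducedCircleMap_iterate_coe]
    exact hφ m n x
  have hbdd' (n : ℕ) : ∃ B, ∀ b, |a n b| ≤ B :=
    (hbdd n).imp fun B hB b => QuotientAddGroup.induction_on b hB
  have hcont' (n : ℕ) := ae_circleMeasure_continuousAt_lift (hφper n) (hcont n)
  have hint (n : ℕ) : ∫ b, a n b ∂circleMeasure ν = ∫ x in Set.Ico 0 1, φ n x ∂ν :=
    (hbdd' n).elim fun B hB => integral_circleMeasure_lift (hφper n)
      (aestronglyMeasurable_of_ae_continuousAt hB (hcont' n))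
  have hle := ha.eventually_le (measurePreserving_inducedCircleMap hL hLν hper)
    (uniformEquicontinuous_inducedCircleMap_iterate hL hLν hc hC hν)
    (denseRange_inducedCircleMap_iterate hL hLν hper hprob hν hirr) hbdd' hcont'
    (by simpa only [hint] using hΛ) hκ
  exact hle.mono fun n hn x => hn x

end CircleMap

/-! ### Transfer matrices -/

section Tridiagonal

variable {R : Type*} [CommRing R]

/-- The `n × n` tridiagonal matrix with diagonal `d 0, …, d (n-1)` and ones on the two
off-diagonals; indexing the diagonal by `ℕ` lets minors be expressed by shifting `d`. -/
def tridiag (d : ℕ → R) (n : ℕ) : Matrix (Fin n) (Fin n) R :=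
  Matrix.of fun i j =>
    (if i = j then d i else 0) +
    (if (i : ℕ) + 1 = (j : ℕ) ∨ (j : ℕ) + 1 = (i : ℕ) then 1 else 0)

lemma tridiag_submatrix_succ (d : ℕ → R) (n : ℕ) :
    (tridiag d (n + 1)).submatrix Fin.succ Fin.succ = tridiag (fun i => d (i + 1)) n := by
  ext i j
  simp [tridiag]

lemma det_tridiag_submatrix_succAbove_one (d : ℕ → R) (n : ℕ) :
    ((tridiag d (n + 2)).submatrix Fin.succ (Fin.succAbove 1)).det
      = (tridiag (fun i => d (i + 2)) n).det := by
  have hminor : ((tridiag d (n + 2)).submatrix Fin.succ (Fin.succAbove 1)).submatrix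
      (Fin.succAbove 0) Fin.succ = tridiag (fun i => d (i + 2)) n := by
    ext i j
    have hj : Fin.succAbove (1 : Fin (n + 2)) j.succ = j.succ.succ := by
      rw [← Fin.succ_zero_eq_one, Fin.succ_succAbove_succ, Fin.succAbove_zero]
    simp [tridiag, hj]
  have hcol (i : Fin n) :
      (tridiag d (n + 2)).submatrix Fin.succ (Fin.succAbove 1) i.succ 0 = 0 := by
    simp [tridiag, Fin.ext_iff]
  rw [Matrix.det_succ_column_zero, Fin.sum_univ_succ, hminor]
  simp only [hcol]
  simp [tridiag]

lemma det_tridiag_add_two (d : ℕ → R) (n : ℕ) :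
    (tridiag d (n + 2)).det
      = d 0 * (tridiag (fun i => d (i + 1)) (n + 1)).det
        - (tridiag (fun i => d (i + 2)) n).det := by
  have hrow (i : Fin n) : tridiag d (n + 2) 0 i.succ.succ = 0 := by
    simp [tridiag, Fin.ext_iff]
  rw [Matrix.det_succ_row_zero, Fin.sum_univ_succ, Fin.sum_univ_succ]
  simp only [hrow, Fin.succAbove_zero, tridiag_submatrix_succ, Fin.succ_zero_eq_one,
    det_tridiag_submatrix_succAbove_one]
  simp [tridiag, sub_eq_add_neg]

end Tridiagonal

section MatrixNorm

lemma matrix_norm_mul_le {l m n A : Type*} [Fintype l] [Fintype m] [Fintype n]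
    [NonUnitalNormedRing A] (M : Matrix l m A) (N : Matrix m n A) :
    ‖M * N‖ ≤ Fintype.card m * ‖M‖ * ‖N‖ := by
  refine (Matrix.norm_le_iff (by positivity)).2 fun i j => ?_
  calc ‖(M * N) i j‖
      ≤ ∑ k, ‖M i k * N k j‖ := by rw [Matrix.mul_apply]; exact norm_sum_le _ _
    _ ≤ ∑ _k : m, ‖M‖ * ‖N‖ := by
        gcongr with k
        refine (norm_mul_le _ _).trans ?_
        gcongr <;> exact Matrix.norm_entry_le_entrywise_sup_norm _
    _ = Fintype.card m * ‖M‖ * ‖N‖ := by simp [mul_assoc]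

lemma abs_det_le_factorial_mul_norm_pow {n : Type*} [Fintype n] [DecidableEq n]
    (M : Matrix n n ℝ) : |M.det| ≤ (Fintype.card n).factorial * ‖M‖ ^ Fintype.card n := by
  simpa using Matrix.det_le (abv := AbsoluteValue.abs) fun i j : n =>
    Matrix.norm_entry_le_entrywise_sup_norm M (i := i) (j := j)

end MatrixNorm

section TransferMatrix

variable (lam : ℝ) (f : ℝ → ℝ) (T : Equiv.Perm ℝ) (E : ℝ)

lemma Pdet_eq_det_tridiag (x : ℝ) (n : ℕ) :
    Pdet lam f T x E n = (tridiag (fun i => lam * f ((T ^ i) x) - E) n).det := by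
  unfold Pdet
  congr 1
  ext i j
  by_cases hij : i = j
  · subst hij; simp [HDir, tridiag]
  · simp [HDir, tridiag, hij]

lemma Pdet_add_two (x : ℝ) (n : ℕ) :
    Pdet lam f T x E (n + 2)
      = (lam * f x - E) * Pdet lam f T (T x) E (n + 1) - Pdet lam f T (T (T x)) E n := by
  simp [Pdet_eq_det_tridiag, det_tridiag_add_two, pow_succ]

lemma transferM_add (x : ℝ) (m n : ℕ) :
    transferM lam f T E x (m + n)
      = transferM lam f T E ((T ^ m) x) n * transferM lam f T E x m := by
  induction n with
  | zero => simp [transferM]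
  | succ n ih =>
    have hA : transferA lam f T E x (m + n) = transferA lam f T E ((T ^ m) x) n := by
      simp [transferA, add_comm m n, pow_add]
    rw [← add_assoc, transferM, ih, transferM, Matrix.mul_assoc, hA]

lemma transferM_one (x : ℝ) : transferM lam f T E x 1 = !![E - lam * f x, -1; 1, 0] := by
  simp [transferM, transferA]

lemma transferM_succ_eq_mul (x : ℝ) (n : ℕ) :
    transferM lam f T E x (n + 1)
      = transferM lam f T E (T x) n * !![E - lam * f x, -1; 1, 0] := by
  rw [add_comm, transferM_add, transferM_one, pow_one]

lemma transferM_apply_zero_zero (x : ℝ) (n : ℕ) :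
    transferM lam f T E x n 0 0 = (-1) ^ n * Pdet lam f T x E n := by
  induction n using Nat.twoStepInduction generalizing x with
  | zero => simp [transferM, Pdet]
  | one => simp [transferM_one, Pdet_eq_det_tridiag, tridiag]
  | more n ih ih' =>
    have hM : transferM lam f T E x (n + 2) 0 0
        = (E - lam * f x) * transferM lam f T E (T x) (n + 1) 0 0
          - transferM lam f T E (T (T x)) n 0 0 := by
      rw [transferM_succ_eq_mul, Matrix.mul_apply, Fin.sum_univ_two]
      conv_lhs => enter [2]; rw [transferM_succ_eq_mul]
      simp [Matrix.mul_apply, Fin.sum_univ_two, sub_eq_add_neg, mul_comm]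
    rw [hM, ih', ih, Pdet_add_two]
    ring

lemma abs_Pdet_le_norm_transferM (x : ℝ) (n : ℕ) :
    |Pdet lam f T x E n| ≤ ‖transferM lam f T E x n‖ := by
  have hentry := Matrix.norm_entry_le_entrywise_sup_norm (transferM lam f T E x n)
    (i := 0) (j := 0)
  simpa [transferM_apply_zero_zero, abs_mul] using hentry

lemma det_transferM (x : ℝ) (n : ℕ) : (transferM lam f T E x n).det = 1 := by
  induction n with
  | zero => simp [transferM]
  | succ n ih => rw [transferM, Matrix.det_mul, ih]; simp [transferA, Matrix.det_fin_two]

lemma one_le_two_mul_norm_transferM (x : ℝ) (n : ℕ) : 1 ≤ 2 * ‖transferM lam f T E x n‖ := by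
  have hdet := abs_det_le_factorial_mul_norm_pow (transferM lam f T E x n)
  simp only [det_transferM, abs_one, Fintype.card_fin, Nat.factorial_two, Nat.cast_ofNat] at hdet
  nlinarith [norm_nonneg (transferM lam f T E x n)]

/-- `log (2‖M_n(x,E)‖)`, the logarithmic growth of the transfer matrices. The entrywise sup norm on
`2 × 2` matrices satisfies `‖AB‖ ≤ 2‖A‖‖B‖`, so the factor `2` makes this exactly subadditive. -/
def transferLog (n : ℕ) (x : ℝ) : ℝ :=
  Real.log (2 * ‖transferM lam f T E x n‖)

lemma transferLog_nonneg (n : ℕ) (x : ℝ) : 0 ≤ transferLog lam f T E n x :=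
  Real.log_nonneg (one_le_two_mul_norm_transferM lam f T E x n)

lemma log_norm_transferM (n : ℕ) (x : ℝ) :
    Real.log ‖transferM lam f T E x n‖ = transferLog lam f T E n x - Real.log 2 := by
  have hpos := one_le_two_mul_norm_transferM lam f T E x n
  rw [transferLog, Real.log_mul two_ne_zero (by linarith), add_sub_cancel_left]

lemma isSubadditiveCocycle_transferLog : IsSubadditiveCocycle T (transferLog lam f T E) := by
  intro m n x
  have hm := one_le_two_mul_norm_transferM lam f T E x m
  have hn := one_le_two_mul_norm_transferM lam f T E ((T ^ m) x) n
  have hmn := one_le_two_mul_norm_transferM lam f T E x (m + n)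
  have hmul := matrix_norm_mul_le (transferM lam f T E ((T ^ m) x) n) (transferM lam f T E x m)
  rw [Fintype.card_fin, Nat.cast_ofNat] at hmul
  rw [Equiv.Perm.iterate_eq_pow]
  unfold transferLog
  rw [← Real.log_mul (by linarith) (by linarith)]
  refine Real.log_le_log (by linarith) ?_
  rw [transferM_add]
  linarith

lemma abs_Pdet_le_exp_transferLog (x : ℝ) (n : ℕ) :
    |Pdet lam f T x E n| ≤ Real.exp (transferLog lam f T E n x) := by
  have hpos := one_le_two_mul_norm_transferM lam f T E x n
  rw [transferLog, Real.exp_log (by linarith)]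
  linarith [abs_Pdet_le_norm_transferM lam f T E x n]

variable {f T}

lemma periodic_transferLog (hf : Function.Periodic f 1) (hT : ∀ t, T (t + 1) = T t + 1) (n : ℕ) :
    Function.Periodic (transferLog lam f T E n) 1 := by
  have hTpow (i : ℕ) (x : ℝ) : (T ^ i) (x + 1) = (T ^ i) x + 1 := by
    rw [← Equiv.Perm.iterate_eq_pow]
    exact (show Function.Commute T (· + 1) from hT).iterate_left i x
  have hM (x : ℝ) : transferM lam f T E (x + 1) n = transferM lam f T E x n := by
    induction n with
    | zero => rfl
    | succ n ih => simp only [transferM, transferA, ih, hTpow, hf _]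
  intro x
  rw [transferLog, hM, transferLog]

lemma exists_abs_transferLog_le (hf : ∃ C, ∀ t, |f t| ≤ C) (n : ℕ) :
    ∃ B, ∀ x, |transferLog lam f T E n x| ≤ B := by
  obtain ⟨C, hC⟩ := hf
  have hone (x : ℝ) : transferLog lam f T E 1 x ≤ Real.log (2 * (|E| + |lam| * C + 1)) := by
    have hx : |E - lam * f x| ≤ |E| + |lam| * C := by
      refine (abs_sub _ _).trans ?_
      rw [abs_mul]
      gcongr
      exact hC x
    have hnorm : ‖transferM lam f T E x 1‖ ≤ |E| + |lam| * C + 1 := by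
      have h0 := (abs_nonneg _).trans hx
      refine (Matrix.norm_le_iff (by linarith)).2 fun i j => ?_
      rw [transferM_one]
      fin_cases i <;> fin_cases j <;> simp <;> linarith
    have hpos := one_le_two_mul_norm_transferM lam f T E x 1
    exact Real.log_le_log (by linarith) (by linarith)
  induction n with
  | zero => exact ⟨|Real.log (2 * ‖(1 : Matrix (Fin 2) (Fin 2) ℝ)‖)|, fun _ => le_rfl⟩
  | succ n ih =>
    obtain ⟨B, hB⟩ := ih
    refine ⟨B + Real.log (2 * (|E| + |lam| * C + 1)), fun x => ?_⟩
    rw [abs_of_nonneg (transferLog_nonneg lam f T E _ x)]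
    exact (isSubadditiveCocycle_transferLog lam f T E n 1 x).trans
      (add_le_add ((le_abs_self _).trans (hB x)) (hone _))

lemma continuousAt_transferLog (hT : StrictMono T) {x : ℝ}
    (hf : ∀ i : ℕ, ContinuousAt f ((T ^ i) x)) (n : ℕ) :
    ContinuousAt (transferLog lam f T E n) x := by
  have hTcont : Continuous T := hT.monotone.continuous_of_surjective T.surjective
  have hA (i : ℕ) : ContinuousAt (fun y => transferA lam f T E y i) x := by
    have hfi : ContinuousAt (fun y => f ((T ^ i) y)) x := by
      refine ContinuousAt.comp (hf i) ?_
      rw [← Equiv.Perm.iterate_eq_pow]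
      exact (hTcont.iterate i).continuousAt
    refine continuousAt_pi.2 fun j => continuousAt_pi.2 fun k => ?_
    fin_cases j <;> fin_cases k <;> simp only [transferA]
    exacts [continuousAt_const.sub (continuousAt_const.mul hfi), continuousAt_const,
      continuousAt_const, continuousAt_const]
  have hM : ContinuousAt (fun y => transferM lam f T E y n) x := by
    induction n with
    | zero => exact continuousAt_const
    | succ n ih => exact ContinuousAt.mul (hA n) ih
  have hpos := one_le_two_mul_norm_transferM lam f T E x n
  exact (hM.norm.const_mul 2).log (by linarith)

variable {ν : Measure ℝ}

lemma ae_continuousAt_transferLog (hT : StrictMono T) (hTν : MeasurePreserving T ν ν)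
    (hf : ∀ᵐ t ∂ν, ContinuousAt f t) (n : ℕ) :
    ∀ᵐ x ∂ν, ContinuousAt (transferLog lam f T E n) x := by
  have hall : ∀ᵐ x ∂ν, ∀ i : ℕ, ContinuousAt f (T^[i] x) :=
    ae_all_iff.2 fun i => (hTν.iterate i).quasiMeasurePreserving.ae hf
  filter_upwards [hall] with x hx
  simp only [Equiv.Perm.iterate_eq_pow] at hx
  exact continuousAt_transferLog lam E hT hx n

lemma tendsto_mean_transferLog (hT : StrictMono T) (hTν : MeasurePreserving T ν ν)
    (hprob : ν (Set.Ico 0 1) = 1) (hbdd : ∃ C, ∀ t, |f t| ≤ C)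
    (hf : ∀ᵐ t ∂ν, ContinuousAt f t) {Λ : ℝ}
    (hΛ : Tendsto (fun n : ℕ => (1 / (n : ℝ)) *
      ∫ x in Set.Ico 0 1, Real.log ‖transferM lam f T E x n‖ ∂ν) atTop (nhds Λ)) :
    Tendsto (fun n : ℕ => (1 / (n : ℝ)) * ∫ x in Set.Ico 0 1, transferLog lam f T E n x ∂ν)
      atTop (nhds Λ) := by
  have hprob' : IsProbabilityMeasure (ν.restrict (Set.Ico 0 1)) := ⟨by simpa using hprob⟩
  have hint (n : ℕ) : Integrable (transferLog lam f T E n) (ν.restrict (Set.Ico 0 1)) :=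
    (exists_abs_transferLog_le lam E hbdd n).elim fun B hB => integrable_of_ae_continuousAt hB
      (ae_restrict_of_ae (ae_continuousAt_transferLog lam E hT hTν hf n))
  have hmean (n : ℕ) : ∫ x in Set.Ico 0 1, Real.log ‖transferM lam f T E x n‖ ∂ν
      = ∫ x in Set.Ico 0 1, transferLog lam f T E n x ∂ν - Real.log 2 := by
    simp only [log_norm_transferM]
    rw [integral_sub (hint n) (integrable_const _)]
    simp
  have hlog : Tendsto (fun n : ℕ => (1 / (n : ℝ)) * Real.log 2) atTop (nhds 0) := by
    simpa using tendsto_one_div_atTop_nhds_zero_nat.mul_const (Real.log 2)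
  simpa [hmean, mul_sub] using hΛ.add hlog

end TransferMatrix

/-! ### Piecewise Lipschitz periodic potentials -/

section Potential

variable {f : ℝ → ℝ} {ν : Measure ℝ} {c C : ℝ}

lemma lipschitzOnWith_of_sub_mem_Icc {s : Set ℝ} {K : ℝ}
    (hf : ∀ u ∈ s, ∀ v ∈ s, u < v → f v - f u ∈ Set.Icc 0 (K * (v - u))) :
    LipschitzOnWith K.toNNReal f s := by
  refine LipschitzOnWith.of_dist_le' fun u hu v hv => ?_
  wlog huv : u < v generalizing u v
  · rcases (not_lt.1 huv).eq_or_lt with rfl | hvu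
    · simp
    · rw [dist_comm, dist_comm u]
      exact this v hv u hu hvu
  obtain ⟨hnonneg, hle⟩ := hf u hu v hv huv
  rwa [dist_comm, dist_comm u, Real.dist_eq, Real.dist_eq, abs_of_nonneg hnonneg,
    abs_of_pos (sub_pos.2 huv)]

lemma isBounded_image_of_lipschitzOnWith {α β : Type*} [PseudoMetricSpace α] [PseudoMetricSpace β]
    {g : α → β} {s : Set α} {K : NNReal} (hg : LipschitzOnWith K g s)
    (hs : Bornology.IsBounded s) : Bornology.IsBounded (g '' s) :=
  Metric.isBounded_image_iff.2 ⟨K * Metric.diam s, fun x hx y hy =>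
    (hg.dist_le_mul x hx y hy).trans (by gcongr; exact Metric.dist_le_diam_of_mem hs hx hy)⟩

lemma exists_abs_le_of_periodic (hper : Function.Periodic f 1)
    (hf : Bornology.IsBounded (f '' Set.Ico 0 1)) : ∃ B, ∀ t, |f t| ≤ B := by
  obtain ⟨B, hB⟩ := hf.exists_norm_le
  refine ⟨B, fun t => ?_⟩
  obtain ⟨s, hs, hts⟩ := hper.exists_mem_Ico₀ one_pos t
  rw [hts]
  exact hB _ ⟨s, hs, rfl⟩

lemma continuousAt_of_periodic_of_notMem_range_intCast (hper : Function.Periodic f 1)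
    (hf : ContinuousOn f (Set.Ioo 0 1)) {t : ℝ} (ht : t ∉ Set.range ((↑) : ℤ → ℝ)) :
    ContinuousAt f t := by
  have hfract : Int.fract t ∈ Set.Ioo 0 1 :=
    ⟨(Int.fract_nonneg t).lt_of_ne' (Int.fract_ne_zero_iff.2 ht), Int.fract_lt_one t⟩
  have hshift : f = fun s => f (s - ⌊t⌋) := funext fun s => by
    simpa using (hper.sub_int_mul_eq ⌊t⌋ (x := s)).symm
  rw [hshift]
  exact ContinuousAt.comp (g := f) (hf.continuousAt (isOpen_Ioo.mem_nhds hfract))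
    (continuousAt_id.sub continuousAt_const)

lemma nullSingletonClass_of_isComparableToLength
    (hper : MeasurePreserving (fun t : ℝ => t + 1) ν ν) (hfin : ν (Set.Ico 0 1) ≠ ⊤) (hc : 0 < c)
    (hν : IsComparableToLength ν c C) : NullSingletonClass ν := by
  refine ⟨fun u => ?_⟩
  have hreal : ν.real {u} ≤ 0 := by
    have hu := (hν u u le_rfl (by linarith)).1
    rw [Set.Icc_self, sub_self] at hu
    exact nonpos_of_mul_nonpos_right hu hc
  have hne : ν {u} ≠ ⊤ := by
    have hfloor : (fun t : ℝ => t + (⌊u⌋ : ℝ)) ⁻¹' {u} ⊆ Set.Ico 0 1 := by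
      intro t ht
      have htu : t = Int.fract u := eq_sub_of_add_eq ht
      exact htu ▸ ⟨Int.fract_nonneg u, Int.fract_lt_one u⟩
    rw [← (measurePreserving_add_int hper ⌊u⌋).measure_preimage
      (measurableSet_singleton u).nullMeasurableSet]
    exact measure_ne_top_of_subset hfloor hfin
  exact (measureReal_eq_zero_iff hne).1 (hreal.antisymm measureReal_nonneg)

lemma ae_continuousAt_of_periodic [NullSingletonClass ν] (hper : Function.Periodic f 1)
    (hf : ContinuousOn f (Set.Ioo 0 1)) : ∀ᵐ t ∂ν, ContinuousAt f t := by
  filter_upwards [(Set.countable_range ((↑) : ℤ → ℝ)).ae_notMem ν] with t ht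
  exact continuousAt_of_periodic_of_notMem_range_intCast hper hf ht

end Potential

theorem Pdet_upper_bound_general {f : ℝ → ℝ} {T : Equiv.Perm ℝ} {ν : Measure ℝ}
    {c C lam α E Λ : ℝ} (hfper : Function.Periodic f 1) (hfbdd : ∃ B, ∀ t, |f t| ≤ B)
    (hfcont : ∀ᵐ t ∂ν, ContinuousAt f t) (hTmono : StrictMono T)
    (hTper : ∀ t, T (t + 1) = T t + 1) (hα : Irrational α)
    (hrot : Tendsto (fun n : ℕ => (T ^ n) 0 / n) atTop (nhds α)) (hc : 0 < c) (hC : 0 ≤ C)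
    (hprob : ν (Set.Ico 0 1) = 1) (hTν : MeasurePreserving T ν ν)
    (hνper : MeasurePreserving (fun t : ℝ => t + 1) ν ν) (hν : IsComparableToLength ν c C)
    (hΛ : Tendsto (fun n : ℕ => (1 / (n : ℝ)) *
      ∫ x in Set.Ico 0 1, Real.log ‖transferM lam f T E x n‖ ∂ν) atTop (nhds Λ))
    {κ : ℝ} (hκ : 0 < κ) :
    ∃ N : ℕ, ∀ n : ℕ, N < n → ∀ x : ℝ, |Pdet lam f T x E n| ≤ Real.exp (n * (Λ + κ)) := by
  let L : CircleDeg1Lift := ⟨⟨T, hTmono.monotone⟩, hTper⟩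
  have hLrot : L.translationNumber = α := by
    simp only [← Equiv.Perm.iterate_eq_pow] at hrot
    exact L.translationNumber_eq_of_tendsto₀ hrot
  have hgrowth := eventually_le_of_isSubadditiveCocycle_lift (L := L) T.bijective (hLrot ▸ hα) hTν
    hνper hprob hc hC hν (isSubadditiveCocycle_transferLog lam f T E)
    (periodic_transferLog lam E hfper hTper) (exists_abs_transferLog_le lam E hfbdd)
    (ae_continuousAt_transferLog lam E hTmono hTν hfcont)
    (tendsto_mean_transferLog lam E hTmono hTν hprob hfbdd hfcont hΛ) hκ
  obtain ⟨N, hN⟩ := eventually_atTop.1 hgrowth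
  exact ⟨N, fun n hn x => (abs_Pdet_le_exp_transferLog lam f T E x n).trans
    (Real.exp_le_exp.2 (hN n hn.le x))⟩

/-- Uniform upper bound on `|P_n(x,E)|`: for every `κ > 0` there is `N`
such that `|P_n(x,E)| ≤ e^{n(L(E)+κ)}` for all `n > N` and all `x`. -/
theorem Pdet_upper_bound
    (f : ℝ → ℝ) (T : Equiv.Perm ℝ) (ν : Measure ℝ)
    (γm γp Cm Cp lam α : ℝ) (E LE : ℝ)
    (hγm : 0 < γm) (hγp : 0 < γp) (hlam : 0 < lam)
    (hfper : ∀ t : ℝ, f (t + 1) = f t) (hf0 : f 0 = 0)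
    (hf1 : Filter.Tendsto f (nhdsWithin 1 (Set.Iio 1)) (nhds 1))
    (hfLip : ∀ u v : ℝ, 0 ≤ u → u < v → v < 1 →
      γm * (v - u) ≤ f v - f u ∧ f v - f u ≤ γp * (v - u))
    (hTmono : StrictMono ⇑T) (hTper : ∀ t : ℝ, T (t + 1) = T t + 1)
    (hαirr : Irrational α)
    (hrot : Filter.Tendsto (fun m : ℕ => (T ^ m) 0 / (m : ℝ)) Filter.atTop (nhds α))
    (hCm : 0 < Cm) (hCp : 0 < Cp)
    (hνprob : ν (Set.Ico (0 : ℝ) 1) = 1)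
    (hνinv : MeasureTheory.Measure.map (⇑T) ν = ν)
    (hνper : MeasureTheory.Measure.map (fun t : ℝ => t + 1) ν = ν)
    (hcomp : ∀ u v : ℝ, u ≤ v → v ≤ u + 1 →
      Cm * (ν (Set.Icc u v)).toReal ≤ v - u ∧ v - u ≤ Cp * (ν (Set.Icc u v)).toReal)
    (hLya : Filter.Tendsto (fun m : ℕ =>
      (1 / (m : ℝ)) * ∫ x in Set.Ico (0 : ℝ) 1, Real.log ‖transferM lam f T E x m‖ ∂ν)
      Filter.atTop (nhds LE))
 :
    ∀ κ : ℝ, 0 < κ → ∃ N : ℕ, ∀ n : ℕ, N < n → ∀ x : ℝ,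
      |Pdet lam f T x E n| ≤ Real.exp ((n : ℝ) * (LE + κ)) := by
  intro κ hκ
  have hνper' : MeasurePreserving (fun t : ℝ => t + 1) ν ν := ⟨measurable_add_const 1, hνper⟩
  have hf : LipschitzOnWith γp.toNNReal f (Set.Ico 0 1) :=
    lipschitzOnWith_of_sub_mem_Icc fun u hu v hv huv =>
      (hfLip u v hu.1 huv hv.2).imp_left (mul_pos hγm (sub_pos.2 huv)).le.trans
  have := nullSingletonClass_of_isComparableToLength hνper' (by simp [hνprob]) hCm hcomp
  have hfbdd := isBounded_image_of_lipschitzOnWith hf (Metric.isBounded_Ico 0 1)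
  exact Pdet_upper_bound_general hfper (exists_abs_le_of_periodic hfper hfbdd)
    (ae_continuousAt_of_periodic hfper (hf.continuousOn.mono Set.Ioo_subset_Ico_self)) hTmono hTper
    hαirr hrot hCm hCp.le hνprob ⟨hTmono.monotone.measurable, hνinv⟩ hνper' hcomp hLya hκ
end
end

section
/- (Best approximation for the invariant measure.) For every x in the circle, every k ∈ ℕ, and every integer i with 1 ≤ i < q_{k+1}, the ν-measure of the arc between x and T^i x (taking the one of the two complementary arcs with smaller ν-measure) is at least the ν-measure of the arc between x and T^{q_k} x (again the one of smaller ν-measure). -/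
/-!
The distribution function `F` of `ν`, normalised by `F 0 = 0`, is a monotone lift of a degree one
circle map. If `ν` has no atoms, invariance makes `F (T t) - F t` constant, so `F` semiconjugates
`T` to a translation, necessarily by the rotation number `α`. Hence the smaller arc between `x` and
`T^m x` has as `ν`-measure the distance from `m α` to the nearest integer, and the theorem becomes
the classical best approximation property of convergents: the vectors `(q_k, p_k)` and
`(q_{k+1}, p_{k+1})` form a basis of `ℤ²` and the errors `q_k α - p_k` alternate in sign, so the two
terms in the expansion of `i α - p` in this basis do not cancel when `0 < i < q_{k+1}`.

An atom would be carried by the orbit of its location to infinitely many points mod `1` of at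
least the same mass, because `α` is irrational.
-/

open MeasureTheory Polynomial Filter

noncomputable section

attribute [local instance] Matrix.normedAddCommGroup

open Set

/-! ### Best approximation by convergents -/

section Integrality

variable {K : Type*} [Field K] [LinearOrder K] [FloorRing K] (v : K) (n : ℕ)

lemma exists_int_pair_eq_contsAux_and_succ :
    (∃ a b : ℤ, (GenContFract.of v).contsAux n = ⟨a, b⟩) ∧
      ∃ a b : ℤ, (GenContFract.of v).contsAux (n + 1) = ⟨a, b⟩ := by
  induction n with
  | zero => exact ⟨⟨1, 0, by simp [GenContFract.contsAux]⟩, ⌊v⌋, 1, by simp [GenContFract.contsAux]⟩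
  | succ n ih =>
    obtain ⟨⟨a, b, hn⟩, a', b', hn'⟩ := ih
    refine ⟨⟨a', b', hn'⟩, ?_⟩
    cases hs : (GenContFract.of v).s.get? n with
    | none => exact ⟨a', b', by rw [GenContFract.contsAux_stable_step_of_terminated hs, hn']⟩
    | some gp =>
      obtain ⟨hone, z, hz⟩ := GenContFract.of_partNum_eq_one_and_exists_int_partDen_eq hs
      refine ⟨z * a' + a, z * b' + b, ?_⟩
      rw [GenContFract.contsAux_recurrence hs hn hn', hone, hz]
      push_cast
      simp only [one_mul]

lemma exists_int_eq_nums : ∃ z : ℤ, (GenContFract.of v).nums n = z := by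
  obtain ⟨a, _, h⟩ := (exists_int_pair_eq_contsAux_and_succ v n).2
  exact ⟨a, congrArg GenContFract.Pair.a h⟩

lemma exists_int_eq_dens : ∃ z : ℤ, (GenContFract.of v).dens n = z := by
  obtain ⟨_, b, h⟩ := (exists_int_pair_eq_contsAux_and_succ v n).2
  exact ⟨b, congrArg GenContFract.Pair.b h⟩

end Integrality

section BestApproximation

variable {K : Type*} [Field K] [LinearOrder K] [IsStrictOrderedRing K]

lemma exists_coordinates_of_det_eq_unit {Q Q' P P' s : ℤ} (hdet : s * (P * Q' - Q * P') = 1)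
    (hQ : 0 < Q) {i : ℤ} (hi : 0 < i) (hiQ : i < Q') (p : ℤ) :
    ∃ u v : ℤ, i = u * Q + v * Q' ∧ p = u * P + v * P' ∧ u ≠ 0 ∧ u * v ≤ 0 := by
  have hQ' : 0 < Q' := hi.trans hiQ
  obtain ⟨u, hu⟩ : ∃ u, u = s * (p * Q' - i * P') := ⟨_, rfl⟩
  obtain ⟨v, hv⟩ : ∃ v, v = s * (P * i - Q * p) := ⟨_, rfl⟩
  have hi_eq : i = u * Q + v * Q' := by
    rw [hu, hv]
    linear_combination (-i) * hdet
  have hp_eq : p = u * P + v * P' := by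
    rw [hu, hv]
    linear_combination (-p) * hdet
  refine ⟨u, v, hi_eq, hp_eq, ?_, ?_⟩
  · rintro rfl
    rw [zero_mul, zero_add] at hi_eq
    have hv_pos : 0 < v := pos_of_mul_pos_left (hi_eq ▸ hi) hQ'.le
    exact (le_mul_of_one_le_left hQ'.le hv_pos).not_gt (hi_eq ▸ hiQ)
  · by_contra! huv
    rcases pos_and_pos_or_neg_and_neg_of_mul_pos huv with ⟨hu_pos, hv_pos⟩ | ⟨hu_neg, hv_neg⟩
    · nlinarith
    · nlinarith

lemma abs_le_abs_intCast_mul_add_intCast_mul {x y : K} (hxy : x * y ≤ 0) {u v : ℤ} (hu : u ≠ 0)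
    (huv : u * v ≤ 0) : |x| ≤ |u * x + v * y| := by
  have huv' : (u : K) * v ≤ 0 := mod_cast huv
  have hsame_sign : 0 ≤ (u * x) * (v * y) := by
    rw [mul_mul_mul_comm]
    exact mul_nonneg_of_nonpos_of_nonpos huv' hxy
  calc |x| ≤ |(u : K)| * |x| :=
        le_mul_of_one_le_left (abs_nonneg x) (mod_cast Int.one_le_abs hu)
    _ = |u * x| := (abs_mul _ _).symm
    _ ≤ |u * x + v * y| := by
        rw [← sq_le_sq]
        nlinarith [sq_nonneg ((v : K) * y)]

variable [FloorRing K] (v : K) (n : ℕ)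

lemma dens_pos : 0 < (GenContFract.of v).dens n := by
  have hmono : Monotone (GenContFract.of v).dens :=
    monotone_nat_of_le_succ fun _ => GenContFract.of_den_mono
  exact zero_lt_one.trans_le (hmono n.zero_le)

lemma dens_mul_sub_nums :
    (GenContFract.of v).dens n * v - (GenContFract.of v).nums n =
      (GenContFract.of v).dens n * (v - (GenContFract.of v).convs n) := by
  rw [GenContFract.conv_eq_num_div_den, mul_sub, mul_div_cancel₀ _ (dens_pos v n).ne']

lemma dens_mul_sub_nums_eq_zero {v : K} {n : ℕ} (h : (GenContFract.of v).TerminatedAt n) :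
    (GenContFract.of v).dens n * v - (GenContFract.of v).nums n = 0 := by
  rw [dens_mul_sub_nums, ← GenContFract.of_correctness_of_terminatedAt h, sub_self, mul_zero]

lemma neg_one_pow_mul_dens_mul_sub_nums_nonneg :
    0 ≤ (-1) ^ n * ((GenContFract.of v).dens n * v - (GenContFract.of v).nums n) := by
  cases hstream : GenContFract.IntFractPair.stream v n with
  | none =>
    have hterm : (GenContFract.of v).TerminatedAt n :=
      GenContFract.of_terminatedAt_n_iff_succ_nth_intFractPair_stream_eq_none.2 <|
        GenContFract.IntFractPair.stream_isSeq v hstream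
    rw [dens_mul_sub_nums_eq_zero hterm, mul_zero]
  | some ifp =>
    have hfr : 0 ≤ ifp.fr := GenContFract.IntFractPair.nth_stream_fr_nonneg hstream
    have hden : 0 ≤ ((GenContFract.of v).contsAux (n + 1)).b := GenContFract.zero_le_of_contsAux_b
    have hden_pred : 0 ≤ ((GenContFract.of v).contsAux n).b := GenContFract.zero_le_of_contsAux_b
    have hsign : 0 ≤ (-1) ^ n * (v - (GenContFract.of v).convs n) := by
      rw [GenContFract.sub_convs_eq hstream]
      split_ifs
      · rw [mul_zero]
      · rw [← mul_div_assoc, ← mul_pow, neg_one_mul, neg_neg, one_pow]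
        positivity
    rw [dens_mul_sub_nums, mul_left_comm]
    exact mul_nonneg (dens_pos v n).le hsign

lemma dens_mul_sub_nums_mul_succ_nonpos :
    ((GenContFract.of v).dens n * v - (GenContFract.of v).nums n) *
      ((GenContFract.of v).dens (n + 1) * v - (GenContFract.of v).nums (n + 1)) ≤ 0 := by
  have hprod := mul_nonneg (neg_one_pow_mul_dens_mul_sub_nums_nonneg v n)
    (neg_one_pow_mul_dens_mul_sub_nums_nonneg v (n + 1))
  rw [mul_mul_mul_comm, ← pow_add, (by ring : n + (n + 1) = 2 * n + 1), pow_succ, pow_mul,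
    neg_one_sq, one_pow, one_mul, neg_one_mul] at hprod
  exact neg_nonneg.1 hprod

variable {v n} in
theorem abs_dens_mul_sub_nums_le {i : ℤ} (hi : 0 < i) (hin : i < (GenContFract.of v).dens (n + 1))
    (p : ℤ) : |(GenContFract.of v).dens n * v - (GenContFract.of v).nums n| ≤ |i * v - p| := by
  by_cases hterm : (GenContFract.of v).TerminatedAt n
  · rw [dens_mul_sub_nums_eq_zero hterm, abs_zero]
    exact abs_nonneg _
  have hdet := (SimpContFract.of v).determinant hterm
  have hsign := dens_mul_sub_nums_mul_succ_nonpos v n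
  have hpos := dens_pos v n
  change (GenContFract.of v).nums n * (GenContFract.of v).dens (n + 1) -
    (GenContFract.of v).dens n * (GenContFract.of v).nums (n + 1) = _ at hdet
  obtain ⟨P, hP⟩ := exists_int_eq_nums v n
  obtain ⟨P', hP'⟩ := exists_int_eq_nums v (n + 1)
  obtain ⟨Q, hQ⟩ := exists_int_eq_dens v n
  obtain ⟨Q', hQ'⟩ := exists_int_eq_dens v (n + 1)
  rw [hP, hP', hQ, hQ'] at hdet hsign
  rw [hQ] at hpos
  rw [hQ'] at hin
  have hunit : (-1) ^ (n + 1) * (P * Q' - Q * P') = 1 := by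
    have hdet' : P * Q' - Q * P' = (-1) ^ (n + 1) := mod_cast hdet
    rw [hdet', ← mul_pow, neg_one_mul, neg_neg, one_pow]
  obtain ⟨a, b, hia, hpb, ha, hab⟩ :=
    exists_coordinates_of_det_eq_unit hunit (mod_cast hpos) hi (mod_cast hin) p
  have hexpand : (i : K) * v - p = a * (Q * v - P) + b * (Q' * v - P') := by
    rw [hia, hpb]
    push_cast
    ring
  rw [hP, hQ, hexpand]
  exact abs_le_abs_intCast_mul_add_intCast_mul hsign ha hab

variable {v n} in
theorem abs_dens_mul_sub_round_le {i : ℤ} (hi : 0 < i)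
    (hin : i < (GenContFract.of v).dens (n + 1)) :
    |(GenContFract.of v).dens n * v - round ((GenContFract.of v).dens n * v)| ≤
      |i * v - round (i * v)| := by
  obtain ⟨P, hP⟩ := exists_int_eq_nums v n
  calc |(GenContFract.of v).dens n * v - round ((GenContFract.of v).dens n * v)|
      ≤ |(GenContFract.of v).dens n * v - P| := round_le _ P
    _ ≤ |i * v - round (i * v)| := hP ▸ abs_dens_mul_sub_nums_le hi hin _

end BestApproximation

/-! ### Measures on the line lifted from the circle -/

section Order

variable {X : Type*} [LinearOrder X] [TopologicalSpace X] [OrderClosedTopology X]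
  [MeasurableSpace X] [OpensMeasurableSpace X] {ν : Measure X} [NullSingletonClass ν]

lemma measure_Ioc_apply_eq_of_monotone {f : X → X} (hmono : Monotone f)
    (hf : MeasurePreserving f ν ν) (a b : X) : ν (Ioc (f a) (f b)) = ν (Ioc a b) := by
  apply le_antisymm
  · calc ν (Ioc (f a) (f b)) = ν (Ioo (f a) (f b)) := measure_congr Ioo_ae_eq_Ioc.symm
      _ = ν (f ⁻¹' Ioo (f a) (f b)) :=
          (hf.measure_preimage measurableSet_Ioo.nullMeasurableSet).symm
      _ ≤ ν (Ioc a b) := measure_mono fun x hx =>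
          ⟨hmono.reflect_lt hx.1, (hmono.reflect_lt hx.2).le⟩
  · calc ν (Ioc a b) ≤ ν (f ⁻¹' Icc (f a) (f b)) := measure_mono fun x hx =>
          ⟨hmono hx.1.le, hmono hx.2⟩
      _ = ν (Icc (f a) (f b)) := hf.measure_preimage measurableSet_Icc.nullMeasurableSet
      _ = ν (Ioc (f a) (f b)) := measure_congr Ioc_ae_eq_Icc.symm

end Order

lemma measure_singleton_le_measure_singleton_apply {X Y : Type*} [MeasurableSpace X]
    [MeasurableSpace Y] [MeasurableSingletonClass Y] {μ : Measure X} {ν : Measure Y} {f : X → Y}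
    (hf : MeasurePreserving f μ ν) (x : X) : μ {x} ≤ ν {f x} := by
  rw [← hf.measure_preimage (measurableSet_singleton (f x)).nullMeasurableSet]
  exact measure_mono (singleton_subset_iff.2 rfl)

lemma measurePreserving_add_zsmul {G : Type*} [AddGroup G] [MeasurableSpace G] [MeasurableAdd G]
    {ν : Measure G} {a : G} (ha : MeasurePreserving (· + a) ν ν) (n : ℤ) :
    MeasurePreserving (· + n • a) ν ν := by
  have hneg : MeasurePreserving (· + -a) ν ν :=
    MeasurePreserving.symm (MeasurableEquiv.addRight a) ha
  induction n using Int.induction_on with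
  | zero =>
    simp only [zero_zsmul, add_zero]
    exact MeasurePreserving.id ν
  | succ n ih => simpa [Function.comp_def, add_assoc, add_zsmul] using ha.comp ih
  | pred n ih => simpa [Function.comp_def, add_assoc, sub_eq_add_neg, add_zsmul] using hneg.comp ih

lemma isAddFundamentalDomain_Ico {p : ℝ} (hp : 0 < p) (t : ℝ) (ν : Measure ℝ) :
    IsAddFundamentalDomain (AddSubgroup.zmultiples p) (Ico t (t + p)) ν := by
  refine IsAddFundamentalDomain.mk' nullMeasurableSet_Ico fun x => ?_
  obtain ⟨n, hn, hunique⟩ := existsUnique_add_zsmul_mem_Ico hp x t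
  refine ⟨⟨n • p, n, rfl⟩, by simpa [AddSubgroup.vadd_def, add_comm] using hn, ?_⟩
  rintro ⟨_, m, rfl⟩ hm
  have : m = n := hunique m (by simpa [AddSubgroup.vadd_def, add_comm] using hm)
  simp [this]

lemma vaddInvariantMeasure_zmultiples {p : ℝ} {ν : Measure ℝ}
    (hp : MeasurePreserving (· + p) ν ν) :
    VAddInvariantMeasure (AddSubgroup.zmultiples p) ℝ ν := by
  constructor
  rintro ⟨_, n, rfl⟩ s hs
  simpa [AddSubgroup.vadd_def, add_comm] using
    (measurePreserving_add_zsmul hp n).measure_preimage hs.nullMeasurableSet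

/-- `ν` is the lift to the universal cover `ℝ` of a Borel probability measure on the circle `ℝ/ℤ`:
it is invariant under the deck translation `t ↦ t + 1` and gives mass `1` to a fundamental
domain. -/
structure IsCircleProbabilityLift (ν : Measure ℝ) : Prop where
  measure_Ico_zero_one : ν (Ico 0 1) = 1
  measurePreserving_add_one : MeasurePreserving (· + (1 : ℝ)) ν ν

namespace IsCircleProbabilityLift

variable {ν : Measure ℝ}

lemma measure_Ioc_add_one (hν : IsCircleProbabilityLift ν) (t : ℝ) : ν (Ioc t (t + 1)) = 1 := by
  have := vaddInvariantMeasure_zmultiples hν.measurePreserving_add_one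
  rw [(isAddFundamentalDomain_Ioc one_pos t ν).measure_eq (isAddFundamentalDomain_Ico one_pos 0 ν),
    zero_add, hν.measure_Ico_zero_one]

lemma isLocallyFiniteMeasure (hν : IsCircleProbabilityLift ν) : IsLocallyFiniteMeasure ν := by
  refine ⟨fun x => ⟨Ioc (x - 1 / 2) (x - 1 / 2 + 1), Ioc_mem_nhds (by linarith) (by linarith), ?_⟩⟩
  rw [hν.measure_Ioc_add_one]
  exact ENNReal.one_lt_top

lemma measure_singleton_fract (hν : IsCircleProbabilityLift ν) (x : ℝ) :
    ν {Int.fract x} = ν {x} := by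
  have hshift := measurePreserving_add_zsmul hν.measurePreserving_add_one ⌊x⌋
  rw [← hshift.measure_preimage (measurableSet_singleton x).nullMeasurableSet]
  congr 1
  ext y
  rw [mem_preimage, mem_singleton_iff, mem_singleton_iff, zsmul_one, ← eq_sub_iff_add_eq,
    Int.self_sub_floor]

end IsCircleProbabilityLift

/-! ### The distribution function as a semiconjugacy -/

lemma intervalIntegral_one_sub {ν : Measure ℝ} [IsLocallyFiniteMeasure ν] (c : ℝ) {a b : ℝ}
    (hab : a ≤ b) :
    (∫ _ in c..b, (1 : ℝ) ∂ν) - ∫ _ in c..a, (1 : ℝ) ∂ν = ν.real (Ioc a b) := by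
  rw [intervalIntegral.integral_interval_sub_left intervalIntegrable_const
    intervalIntegrable_const, intervalIntegral.integral_const']
  simp [hab]

/-- The distribution function of `ν` normalised to vanish at `0`, i.e. the signed `ν`-mass of
`(0, t]`, as a lift of a degree one circle map. -/
def circleCdf {ν : Measure ℝ} (hν : IsCircleProbabilityLift ν) : CircleDeg1Lift where
  toFun t := ∫ _ in (0 : ℝ)..t, (1 : ℝ) ∂ν
  monotone' a b hab := by
    have := hν.isLocallyFiniteMeasure
    rw [← sub_nonneg, intervalIntegral_one_sub 0 hab]
    exact measureReal_nonneg
  map_add_one' t := by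
    have := hν.isLocallyFiniteMeasure
    rw [← sub_eq_iff_eq_add', intervalIntegral_one_sub 0 (by linarith), measureReal_def,
      hν.measure_Ioc_add_one, ENNReal.toReal_one]

section CircleCdf

variable {ν : Measure ℝ} (hν : IsCircleProbabilityLift ν) {f : CircleDeg1Lift}

lemma circleCdf_sub_circleCdf {a b : ℝ} (hab : a ≤ b) :
    circleCdf hν b - circleCdf hν a = ν.real (Ioc a b) :=
  have := hν.isLocallyFiniteMeasure
  intervalIntegral_one_sub 0 hab

variable [NullSingletonClass ν]

lemma circleCdf_map_sub_circleCdf_map (hf : MeasurePreserving f ν ν) (a b : ℝ) :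
    circleCdf hν (f b) - circleCdf hν (f a) = circleCdf hν b - circleCdf hν a := by
  wlog hab : a ≤ b generalizing a b
  · rw [← neg_sub, this b a (le_of_not_ge hab), neg_sub]
  rw [circleCdf_sub_circleCdf hν hab, circleCdf_sub_circleCdf hν (f.mono hab), measureReal_def,
    measureReal_def, measure_Ioc_apply_eq_of_monotone f.monotone hf]

theorem circleCdf_map (hf : MeasurePreserving f ν ν) (x : ℝ) :
    circleCdf hν (f x) = circleCdf hν x + f.translationNumber := by
  set c := circleCdf hν (f 0) - circleCdf hν 0 with hc
  have hsemiconj : Function.Semiconj (circleCdf hν) f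
      (CircleDeg1Lift.translate (Multiplicative.ofAdd c)) := fun y => by
    rw [CircleDeg1Lift.translate_apply, hc]
    linarith [circleCdf_map_sub_circleCdf_map hν hf 0 y]
  have hτ : f.translationNumber = c :=
    (CircleDeg1Lift.translationNumber_eq_of_semiconj hsemiconj).trans
      (CircleDeg1Lift.translationNumber_translate c)
  rw [hsemiconj x, CircleDeg1Lift.translate_apply, hτ, add_comm]

theorem circleCdf_pow_map (hf : MeasurePreserving f ν ν) (n : ℕ) (x : ℝ) :
    circleCdf hν ((f ^ n) x) = circleCdf hν x + n * f.translationNumber := by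
  have hfn : MeasurePreserving (f ^ n) ν ν := f.coe_pow n ▸ hf.iterate n
  rw [circleCdf_map hν hfn, CircleDeg1Lift.translationNumber_pow]

end CircleCdf

lemma injective_fract_pow_apply {f : CircleDeg1Lift} (hirr : Irrational f.translationNumber)
    (x : ℝ) : Function.Injective fun n : ℕ => Int.fract ((f ^ n) x) := by
  refine Function.Injective.of_lt_imp_ne fun m n hmn heq => ?_
  obtain ⟨z, hz⟩ := Int.fract_eq_fract.1 heq.symm
  have hreturn : (f ^ (n - m)) ((f ^ m) x) = (f ^ m) x + z := by
    rw [← CircleDeg1Lift.mul_apply, ← pow_add, Nat.sub_add_cancel hmn.le, ← hz, add_sub_cancel]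
  have hrat := f.translationNumber_of_map_pow_eq_add_int hreturn (Nat.sub_pos_of_lt hmn)
  exact hirr ⟨z / (n - m : ℕ), by rw [hrat]; push_cast; rfl⟩

theorem nullSingletonClass_of_irrational {ν : Measure ℝ} (hν : IsCircleProbabilityLift ν)
    {f : CircleDeg1Lift} (hf : MeasurePreserving f ν ν)
    (hirr : Irrational f.translationNumber) : NullSingletonClass ν := by
  refine ⟨fun x => ?_⟩
  by_contra hx
  let orbit := range fun n : ℕ => Int.fract ((f ^ n) x)
  have horbit_infinite : orbit.Infinite :=
    infinite_range_of_injective (injective_fract_pow_apply hirr x)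
  have horbit_subset : orbit ⊆ Ico 0 1 :=
    range_subset_iff.2 fun n => ⟨Int.fract_nonneg _, Int.fract_lt_one _⟩
  have hatom : ∀ y ∈ orbit, ν {x} ≤ ν {y} := by
    rintro _ ⟨n, rfl⟩
    have hfn : MeasurePreserving (f ^ n) ν ν := f.coe_pow n ▸ hf.iterate n
    exact (measure_singleton_le_measure_singleton_apply hfn x).trans_eq
      (hν.measure_singleton_fract _).symm
  have hle := measure_mono (μ := ν) horbit_subset
  rw [horbit_infinite.meas_eq_top ⟨ν {x}, hx, hatom⟩, hν.measure_Ico_zero_one] at hle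
  exact ENNReal.one_ne_top (top_le_iff.1 hle)

/-! ### Measures of arcs -/

lemma abs_add_intCast_sub_round {K : Type*} [Field K] [LinearOrder K] [IsStrictOrderedRing K]
    [FloorRing K] {a : K} (ha : a ∈ Icc 0 1) (z : ℤ) :
    |a + z - round (a + z)| = min a (1 - a) := by
  rw [abs_sub_round_eq_min, Int.fract_add_intCast]
  rcases ha.2.lt_or_eq with hlt | rfl
  · rw [Int.fract_eq_self.2 ⟨ha.1, hlt⟩]
  · simp

lemma arcMeasure_mem_Icc {ν : Measure ℝ} [NullSingletonClass ν]
    (hν : IsCircleProbabilityLift ν) (u v : ℝ) : arcMeasure ν u v ∈ Icc 0 1 := by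
  refine ⟨ENNReal.toReal_nonneg, ?_⟩
  rw [arcMeasure, ← measure_congr Ioc_ae_eq_Icc, ← ENNReal.toReal_one, ← hν.measure_Ioc_add_one u]
  refine ENNReal.toReal_mono (by simp [hν.measure_Ioc_add_one]) (measure_mono ?_)
  exact Ioc_subset_Ioc_right (by linarith [Int.fract_lt_one (v - u)])

section Arcs

variable {ν : Measure ℝ} (hν : IsCircleProbabilityLift ν) [NullSingletonClass ν]

lemma arcMeasure_eq_circleCdf_sub_sub_floor (u v : ℝ) :
    arcMeasure ν u v = circleCdf hν v - circleCdf hν u - ⌊v - u⌋ := by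
  have hle : u ≤ u + Int.fract (v - u) := le_add_of_nonneg_right (Int.fract_nonneg _)
  have hend : u + Int.fract (v - u) = v - ⌊v - u⌋ := by
    rw [Int.fract]
    ring
  calc arcMeasure ν u v = ν.real (Ioc u (u + Int.fract (v - u))) :=
        congrArg ENNReal.toReal (measure_congr Ioc_ae_eq_Icc.symm)
    _ = circleCdf hν (v - ⌊v - u⌋) - circleCdf hν u := by
        rw [← circleCdf_sub_circleCdf hν hle, hend]
    _ = circleCdf hν v - circleCdf hν u - ⌊v - u⌋ := by
        rw [CircleDeg1Lift.map_sub_int, sub_right_comm]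

theorem arcDist_eq_abs_sub_round (u v : ℝ) :
    arcDist ν u v =
      |circleCdf hν v - circleCdf hν u - round (circleCdf hν v - circleCdf hν u)| := by
  have huv := arcMeasure_eq_circleCdf_sub_sub_floor hν u v
  have hvu := arcMeasure_eq_circleCdf_sub_sub_floor hν v u
  have hmin : |circleCdf hν v - circleCdf hν u - round (circleCdf hν v - circleCdf hν u)| =
      min (arcMeasure ν u v) (1 - arcMeasure ν u v) := by
    rw [← abs_add_intCast_sub_round (arcMeasure_mem_Icc hν u v) ⌊v - u⌋, huv, sub_add_cancel]
  rw [hmin, arcDist]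
  by_cases hint : v - u ∈ range ((↑) : ℤ → ℝ)
  · obtain ⟨z, hz⟩ := hint
    have hzero : arcMeasure ν u v = 0 := by simp [arcMeasure, ← hz]
    have hnonneg : 0 ≤ arcMeasure ν v u := ENNReal.toReal_nonneg
    rw [hzero, min_eq_left hnonneg, sub_zero, min_eq_left zero_le_one]
  · have hceil : ⌈v - u⌉ = ⌊v - u⌋ + 1 := (Int.ceil_eq_floor_add_one_iff_notMem _).2 hint
    have hfloor : ⌊u - v⌋ = -(⌊v - u⌋ + 1) := by rw [← neg_sub v u, Int.floor_neg, hceil]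
    have hcompl : arcMeasure ν v u = 1 - arcMeasure ν u v := by
      rw [hvu, huv, hfloor]
      push_cast
      ring
    rw [hcompl]

end Arcs

theorem best_approximation_invariant_measure_general {ν : Measure ℝ}
    (hν : IsCircleProbabilityLift ν) [NullSingletonClass ν] {f : CircleDeg1Lift}
    (hf : MeasurePreserving f ν ν) {q : ℕ → ℕ}
    (hq : ∀ m, (q m : ℝ) = (GenContFract.of f.translationNumber).dens m) (x : ℝ) {k i : ℕ}
    (hi : 0 < i) (hik : i < q (k + 1)) :
    arcDist ν x ((f ^ q k) x) ≤ arcDist ν x ((f ^ i) x) := by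
  have harc (m : ℕ) : arcDist ν x ((f ^ m) x) =
      |m * f.translationNumber - round (m * f.translationNumber)| := by
    rw [arcDist_eq_abs_sub_round hν, circleCdf_pow_map hν hf, add_sub_cancel_left]
  have hik' : ((i : ℤ) : ℝ) < (GenContFract.of f.translationNumber).dens (k + 1) := by
    rw [← hq]
    exact mod_cast hik
  rw [harc, harc, hq]
  exact mod_cast abs_dens_mul_sub_round_le (mod_cast hi) hik'

/-- **Best approximation for the invariant measure.** For every `x`, `k`,
and `1 ≤ i < q_{k+1}`, the smaller arc between `x` and `T^i x` has `ν`-measure at least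
that of the smaller arc between `x` and `T^{q_k} x`. -/
theorem best_approximation_invariant_measure
    (T : Equiv.Perm ℝ) (ν : Measure ℝ) (α : ℝ) (q : ℕ → ℕ)
    (hTmono : StrictMono ⇑T) (hTper : ∀ t : ℝ, T (t + 1) = T t + 1)
    (hαirr : Irrational α)
    (hrot : Filter.Tendsto (fun m : ℕ => (T ^ m) 0 / (m : ℝ)) Filter.atTop (nhds α))
    (hνprob : ν (Set.Ico (0 : ℝ) 1) = 1)
    (hνinv : MeasureTheory.Measure.map (⇑T) ν = ν)
    (hνper : MeasureTheory.Measure.map (fun t : ℝ => t + 1) ν = ν)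
    (hqpos : ∀ m : ℕ, 0 < q m)
    (hqcf : ∀ m : ℕ, ((q m : ℕ) : ℝ) = (GenContFract.of α).dens m)
 :
    ∀ (x : ℝ) (k i : ℕ), 1 ≤ i → i < q (k + 1) →
      arcDist ν x ((T ^ (q k)) x) ≤ arcDist ν x ((T ^ i) x) := by
  let f : CircleDeg1Lift := ⟨⟨T, hTmono.monotone⟩, hTper⟩
  have hpow (m : ℕ) (t : ℝ) : (T ^ m) t = (f ^ m) t := by
    rw [CircleDeg1Lift.coe_pow, ← Equiv.Perm.iterate_eq_pow]
    rfl
  have hτ : f.translationNumber = α :=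
    tendsto_nhds_unique f.tendsto_translation_number₀ (by simpa only [hpow] using hrot)
  have hν : IsCircleProbabilityLift ν := ⟨hνprob, by fun_prop, hνper⟩
  have hf : MeasurePreserving f ν ν := ⟨f.monotone.measurable, hνinv⟩
  have : NullSingletonClass ν := nullSingletonClass_of_irrational hν hf (hτ ▸ hαirr)
  intro x k i hi hik
  rw [hpow, hpow]
  exact best_approximation_invariant_measure_general hν hf (hτ ▸ hqcf) x hi hik
end
end
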